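/- Let 1 ≤ p, q₁, q₂ ≤ ∞ satisfy 1/r = 1/p + 1/q₁ + 1/q₂, set q_max = max(q₁,q₂) and q_min = min(q₁,q₂), and assume q_max ≥ p′. Let a ∈ L^p S^m_ρ(n,2) with 0 ≤ ρ ≤ 1 and m < n(ρ−1)( 1/min(2, q_max, p) + 1/min(2, q_min, p·q_max/(q_max+p)) ), with the convention that p·q_max/(q_max+p) = q_max when p = ∞. Then the bilinear pseudodifferential operator T_a(f,g)(x) = ∫∫ a(x,ξ,η) e^{i⟨x, ξ+η⟩} f̂(ξ) ĝ(η) dξ dη satisfies ‖T_a(f,g)‖_{L^r} ≤ C ‖f‖_{L^{q₁}} ‖g‖_{L^{q₂}} for all Schwartz f, g. -/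

import Mathlib

open MeasureTheory Real Complex
open scoped ENNReal NNReal RealInnerProductSpace SchwartzMap Classical

noncomputable section

/-- `ℝⁿ` as a Euclidean space. -/
abbrev En (n : ℕ) : Type := EuclideanSpace ℝ (Fin n)

/-- Partial derivative in the `i`-th coordinate direction. -/
def pd {n : ℕ} {F : Type} [NormedAddCommGroup F] [NormedSpace ℝ F]
    (i : Fin n) (f : En n → F) : En n → F :=
  fun x => fderiv ℝ f x (EuclideanSpace.single i 1)

/-- Multi-index partial derivative `∂^α`. -/
def mderiv {n : ℕ} {F : Type} [NormedAddCommGroup F] [NormedSpace ℝ F]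
    (α : Fin n → ℕ) (f : En n → F) : En n → F :=
  (List.finRange n).foldr (fun i g => (pd i)^[α i] g) f

/-- The order `|α|` of a multi-index. -/
def mdeg {n : ℕ} (α : Fin n → ℕ) : ℕ := ∑ i, α i

/-- The finite set of multi-indices `α` with every entry `≤ k` and `|α| ≤ k`;
this enumerates all multi-indices of order at most `k`. -/
def multiIdx (n k : ℕ) : Finset (Fin n → ℕ) :=
  (Fintype.piFinset fun _ : Fin n => Finset.range (k + 1)).filter fun α => mdeg α ≤ k

/-- Japanese bracket `⟨ξ⟩^t = (1+|ξ|²)^{t/2}`. -/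
def jb {n : ℕ} (ξ : En n) (t : ℝ) : ℝ := (1 + ‖ξ‖ ^ 2) ^ (t / 2)

/-- The rough amplitude class `L^p S^m_ρ`. -/
def LpSm {n : ℕ} (p : ℝ≥0∞) (m ρ : ℝ) (a : En n → En n → ℂ) : Prop :=
  (∀ x, ContDiff ℝ (⊤ : ℕ∞) (a x)) ∧
  (∀ (α : Fin n → ℕ) (ξ : En n), AEStronglyMeasurable (fun x => mderiv α (a x) ξ) volume) ∧
  ∀ α : Fin n → ℕ, ∃ C : ℝ, ∀ ξ : En n,
    eLpNorm (fun x => mderiv α (a x) ξ) p volume ≤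
      ENNReal.ofReal (C * jb ξ (m - ρ * (mdeg α : ℝ)))

/-- The seminorms `|a|_{p,m,s}` of an amplitude in `L^p S^m_ρ`. -/
def aSemi {n : ℕ} (p : ℝ≥0∞) (m ρ : ℝ) (s : ℕ) (a : En n → En n → ℂ) : ℝ≥0∞ :=
  ∑ α ∈ multiIdx n s, ⨆ ξ : En n,
    ENNReal.ofReal (jb ξ (ρ * (mdeg α : ℝ) - m)) *
      eLpNorm (fun x => mderiv α (a x) ξ) p volume

/-- The mixed derivative `∂_ξ^α ∂_x^β φ(x,ξ)`. -/
def mixedD {n : ℕ} (α β : Fin n → ℕ) (φ : En n → En n → ℝ) (x ξ : En n) : ℝ :=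
  mderiv α (fun ζ => mderiv β (fun y => φ y ζ) x) ξ

/-- The phase function class `Φ^k`. -/
def PhiClass {n : ℕ} (k : ℕ) (φ : En n → En n → ℝ) : Prop :=
  ContDiffOn ℝ (⊤ : ℕ∞) (fun q : En n × En n => φ q.1 q.2) {q | q.2 ≠ 0} ∧
  (∀ (x ξ : En n) (t : ℝ), 0 < t → φ x (t • ξ) = t * φ x ξ) ∧
  ∀ α β : Fin n → ℕ, k ≤ mdeg α + mdeg β →
    ∃ C : ℝ, ∀ (x ξ : En n), ξ ≠ 0 →
      ‖ξ‖ ^ ((mdeg α : ℝ) - 1) * |mixedD α β φ x ξ| ≤ C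

/-- The mixed Hessian matrix `[∂²φ/∂x_j∂ξ_k]`. -/
def mixHess {n : ℕ} (φ : En n → En n → ℝ) (x ξ : En n) : Matrix (Fin n) (Fin n) ℝ :=
  Matrix.of fun j k => pd j (fun y => pd k (φ y) ξ) x

/-- The strong non-degeneracy (SND) condition. -/
def SNDcond {n : ℕ} (φ : En n → En n → ℝ) : Prop :=
  ∃ c : ℝ, 0 < c ∧ ∀ (x ξ : En n), ξ ≠ 0 → c ≤ |(mixHess φ x ξ).det|

/-- The Fourier transform `f̂(ξ) = ∫ e^{-i⟨y,ξ⟩} f(y) dy`. -/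
def ft {n : ℕ} (f : En n → ℂ) (ξ : En n) : ℂ :=
  ∫ y : En n, Complex.exp (-(Complex.I * Complex.ofReal ⟪y, ξ⟫)) * f y

/-- The linear Fourier integral operator
`T_a f(x) = (2π)^{-n} ∫ e^{iφ(x,ξ)} a(x,ξ) f̂(ξ) dξ`. -/
def fio {n : ℕ} (a : En n → En n → ℂ) (φ : En n → En n → ℝ) (f : En n → ℂ)
    (x : En n) : ℂ :=
  (((2 * Real.pi) ^ n)⁻¹ : ℝ) •
    ∫ ξ : En n, Complex.exp (Complex.I * Complex.ofReal (φ x ξ)) * a x ξ * ft f ξ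

/-- The conjugate exponent `p′` of `p ∈ [1,∞]`. -/
def pconj (p : ℝ≥0∞) : ℝ≥0∞ := (1 - p⁻¹)⁻¹

/-- The order `𝔪(ρ,p,q)` from Definition 4.6. -/
def frakm (n : ℕ) (ρ : ℝ) (p q : ℝ≥0∞) : ℝ :=
  if p < 2 ∨ (2 ≤ p ∧ q < pconj p) then
    (n : ℝ) * (ρ - 1) * (min p q)⁻¹.toReal -
      (((n : ℝ) - 1) / 2) * (p⁻¹.toReal + (min p q)⁻¹.toReal)
  else if 2 ≤ q then
    (n : ℝ) * (ρ - 1) / 2 - ((n : ℝ) - 1) * (1 / 2 - q⁻¹.toReal)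
  else
    (n : ℝ) * (ρ - 1) * q⁻¹.toReal -
      (((n : ℝ) - 1) / (1 - 2 * p⁻¹.toReal)) * (q⁻¹.toReal - 1 / 2)

/-- The order `ℳ(ρ,p,q)` from Definition 4.6. -/
def scrM (n : ℕ) (ρ : ℝ) (p q : ℝ≥0∞) : ℝ :=
  (n : ℝ) * (ρ - 1) * q⁻¹.toReal -
    (((n : ℝ) - 1) / (1 + p⁻¹.toReal)) * (q⁻¹.toReal - 1 / 2)

/-- The distribution function `λ_f(s) = |{x : |f(x)| > s}|`. -/
def distFn {n : ℕ} (f : En n → ℂ) (s : ℝ) : ℝ≥0∞ := volume {x : En n | s < ‖f x‖}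

/-- The decreasing rearrangement `f*`. -/
def rearr {n : ℕ} (f : En n → ℂ) (t : ℝ) : ℝ :=
  sInf {s : ℝ | 0 ≤ s ∧ distFn f s ≤ ENNReal.ofReal t}

/-- The Lorentz space quasinorm
`‖f‖_{L^{r,q}} = (∫_0^∞ (t^{1/r} f*(t))^q dt/t)^{1/q}`. -/
def lorentzNorm {n : ℕ} (r q : ℝ≥0∞) (f : En n → ℂ) : ℝ≥0∞ :=
  (∫⁻ t in Set.Ioi (0 : ℝ),
      ENNReal.ofReal ((t ^ r⁻¹.toReal * rearr f t) ^ q.toReal / t)) ^ q⁻¹.toReal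

/-- Mixed frequency derivatives `∂_ξ^{α₁} ∂_η^{α₂} a(x,ξ,η)` of a bilinear amplitude. -/
def d2 {n : ℕ} (α₁ α₂ : Fin n → ℕ) (a : En n → En n → En n → ℂ)
    (x ξ η : En n) : ℂ :=
  mderiv α₁ (fun ζ => mderiv α₂ (fun θ => a x ζ θ) η) ξ

/-- Mixed derivatives `∂_x^β ∂_ξ^{α₁} ∂_η^{α₂} a(x,ξ,η)` of a bilinear amplitude. -/
def d3 {n : ℕ} (β α₁ α₂ : Fin n → ℕ) (a : En n → En n → En n → ℂ)
    (x ξ η : En n) : ℂ :=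
  mderiv β (fun y => d2 α₁ α₂ a y ξ η) x

/-- The bilinear product-type rough amplitude class `L^p_Π S^{(m₁,m₂)}_{(ρ₁,ρ₂)}(n,2)`. -/
def LpPiSm2 {n : ℕ} (p : ℝ≥0∞) (m₁ m₂ ρ₁ ρ₂ : ℝ) (a : En n → En n → En n → ℂ) : Prop :=
  (∀ x, ContDiff ℝ (⊤ : ℕ∞) (fun q : En n × En n => a x q.1 q.2)) ∧
  (∀ (α₁ α₂ : Fin n → ℕ) (ξ η : En n),
    AEStronglyMeasurable (fun x => d2 α₁ α₂ a x ξ η) volume) ∧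
  ∀ α₁ α₂ : Fin n → ℕ, ∃ C : ℝ, ∀ ξ η : En n,
    eLpNorm (fun x => d2 α₁ α₂ a x ξ η) p volume ≤
      ENNReal.ofReal (C * jb ξ (m₁ - ρ₁ * (mdeg α₁ : ℝ)) * jb η (m₂ - ρ₂ * (mdeg α₂ : ℝ)))

/-- The bilinear rough amplitude class `L^p S^m_ρ(n,2)`. -/
def LpSm2 {n : ℕ} (p : ℝ≥0∞) (m ρ : ℝ) (a : En n → En n → En n → ℂ) : Prop :=
  (∀ x, ContDiff ℝ (⊤ : ℕ∞) (fun q : En n × En n => a x q.1 q.2)) ∧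
  (∀ (α₁ α₂ : Fin n → ℕ) (ξ η : En n),
    AEStronglyMeasurable (fun x => d2 α₁ α₂ a x ξ η) volume) ∧
  ∀ α₁ α₂ : Fin n → ℕ, ∃ C : ℝ, ∀ ξ η : En n,
    eLpNorm (fun x => d2 α₁ α₂ a x ξ η) p volume ≤
      ENNReal.ofReal (C * (1 + ‖ξ‖ + ‖η‖) ^ (m - ρ * ((mdeg α₁ : ℝ) + (mdeg α₂ : ℝ))))

/-- The bilinear Hörmander class `S^m_{ρ,δ}(n,2)`. -/
def HormS2 {n : ℕ} (m ρ δ : ℝ) (a : En n → En n → En n → ℂ) : Prop :=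
  ContDiff ℝ (⊤ : ℕ∞) (fun q : En n × En n × En n => a q.1 q.2.1 q.2.2) ∧
  ∀ β α₁ α₂ : Fin n → ℕ, ∃ C : ℝ, ∀ x ξ η : En n,
    ‖d3 β α₁ α₂ a x ξ η‖ ≤
      C * (1 + ‖ξ‖ + ‖η‖) ^ (m - ρ * ((mdeg α₁ : ℝ) + (mdeg α₂ : ℝ)) + δ * (mdeg β : ℝ))

/-- The bilinear Fourier integral operator
`T_a(f,g)(x) = ∫∫ a(x,ξ,η) e^{iφ₁(x,ξ)+iφ₂(x,η)} f̂(ξ) ĝ(η) dξ dη`. -/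
def bfio {n : ℕ} (a : En n → En n → En n → ℂ) (φ₁ φ₂ : En n → En n → ℝ)
    (f g : En n → ℂ) (x : En n) : ℂ :=
  ∫ w : En n × En n,
    a x w.1 w.2 * Complex.exp (Complex.I * Complex.ofReal (φ₁ x w.1 + φ₂ x w.2)) *
      ft f w.1 * ft g w.2

/-- Partial derivative of a function of `N` frequency variables in the `i`-th coordinate
of the `j`-th variable. -/
def pdN {n N : ℕ} (j : Fin N) (i : Fin n) (g : (Fin N → En n) → ℂ) :
    (Fin N → En n) → ℂ :=
  fun ξ => fderiv ℝ g ξ (Pi.single j (EuclideanSpace.single i 1))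

/-- Multi-index derivative `∂_{ξ₁}^{A 1} ⋯ ∂_{ξ_N}^{A N}`. -/
def mderivN {n N : ℕ} (A : Fin N → Fin n → ℕ) (g : (Fin N → En n) → ℂ) :
    (Fin N → En n) → ℂ :=
  (List.finRange N).foldr
    (fun j h => (List.finRange n).foldr (fun i h' => (pdN j i)^[A j i] h') h) g

/-- The multilinear product-type rough amplitude class `L^p_Π S^{m⃗}_{ρ⃗}(n,N)`. -/
def LpPiSmN {n N : ℕ} (p : ℝ≥0∞) (m ρ : Fin N → ℝ)
    (a : En n → (Fin N → En n) → ℂ) : Prop :=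
  (∀ x, ContDiff ℝ (⊤ : ℕ∞) (a x)) ∧
  (∀ (A : Fin N → Fin n → ℕ) (ξ : Fin N → En n),
    AEStronglyMeasurable (fun x => mderivN A (a x) ξ) volume) ∧
  ∀ A : Fin N → Fin n → ℕ, ∃ C : ℝ, ∀ ξ : Fin N → En n,
    eLpNorm (fun x => mderivN A (a x) ξ) p volume ≤
      ENNReal.ofReal (C * ∏ j, jb (ξ j) (m j - ρ j * (mdeg (A j) : ℝ)))

/-- The multilinear rough amplitude class `L^p S^m_ρ(n,N)`. -/
def LpSmN {n N : ℕ} (p : ℝ≥0∞) (m ρ : ℝ) (a : En n → (Fin N → En n) → ℂ) : Prop :=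
  (∀ x, ContDiff ℝ (⊤ : ℕ∞) (a x)) ∧
  (∀ (A : Fin N → Fin n → ℕ) (ξ : Fin N → En n),
    AEStronglyMeasurable (fun x => mderivN A (a x) ξ) volume) ∧
  ∀ A : Fin N → Fin n → ℕ, ∃ C : ℝ, ∀ ξ : Fin N → En n,
    eLpNorm (fun x => mderivN A (a x) ξ) p volume ≤
      ENNReal.ofReal (C * (1 + ∑ j, ‖ξ j‖) ^ (m - ρ * ∑ j, (mdeg (A j) : ℝ)))

/-- The multilinear Fourier integral operator. -/
def mfio {n N : ℕ} (a : En n → (Fin N → En n) → ℂ) (φ : Fin N → En n → En n → ℝ)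
    (f : Fin N → En n → ℂ) (x : En n) : ℂ :=
  ∫ ξ : Fin N → En n,
    a x ξ * Complex.exp (Complex.I * Complex.ofReal (∑ j, φ j x (ξ j))) *
      ∏ j, ft (f j) (ξ j)

/-- The Sobolev (Bessel potential) norm `‖f‖_{H^{s,q}} = ‖ℱ^{-1}(⟨ξ⟩^s f̂)‖_{L^q}`. -/
def besselNorm {n : ℕ} (s : ℝ) (q : ℝ≥0∞) (f : En n → ℂ) : ℝ≥0∞ :=
  eLpNorm (fun x : En n =>
    (((2 * Real.pi) ^ n)⁻¹ : ℝ) •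
      ∫ ξ : En n, Complex.ofReal (jb ξ s) * ft f ξ *
        Complex.exp (Complex.I * Complex.ofReal ⟪x, ξ⟫)) q volume

/-! ### Measure-theoretic lemmas -/

theorem enn_holder {X : Type*} [MeasurableSpace X] {μ : Measure X} {p q r : ℝ≥0∞}
    {F G : X → ℝ≥0∞} (hF : AEMeasurable F μ) (hG : AEMeasurable G μ)
    (hpqr : r⁻¹ = p⁻¹ + q⁻¹) (hp0 : p ≠ 0) (hq0 : q ≠ 0) :
    eLpNorm (fun x => F x * G x) r μ ≤ eLpNorm F p μ * eLpNorm G q μ := by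
  by_cases hp : p = ∞
  · subst hp
    have : r = q := by simpa using hpqr
    subst this
    refine eLpNorm_le_mul_eLpNorm_of_ae_le_mul'' (f := fun x => F x * G x) (g := G) r
      hG.aestronglyMeasurable ?_
    have := ae_le_eLpNormEssSup (f := F) (μ := μ)
    filter_upwards [this] with x hx
    simp only [enorm_eq_self, eLpNorm_exponent_top] at *
    gcongr
  by_cases hq : q = ∞
  · subst hq
    have : r = p := by simpa using hpqr
    subst this
    rw [mul_comm]
    refine eLpNorm_le_mul_eLpNorm_of_ae_le_mul'' (f := fun x => F x * G x) (g := F) r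
      hF.aestronglyMeasurable ?_
    have := ae_le_eLpNormEssSup (f := G) (μ := μ)
    filter_upwards [this] with x hx
    simp only [enorm_eq_self, eLpNorm_exponent_top] at *
    rw [mul_comm]
    gcongr
  have hp' : 0 < p.toReal := ENNReal.toReal_pos hp0 hp
  have hq' : 0 < q.toReal := ENNReal.toReal_pos hq0 hq
  have hpqr' : 1 / r.toReal = 1 / p.toReal + 1 / q.toReal := by
    have := congrArg ENNReal.toReal hpqr
    rw [ENNReal.toReal_add (by simpa using hp0) (by simpa using hq0)] at this
    simpa using this
  have hr : 0 < r.toReal := one_div_pos.mp <| by rw [hpqr']; positivity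
  obtain ⟨hr₁, hr₂⟩ := ENNReal.toReal_pos_iff.mp hr
  have hrp : r.toReal < p.toReal := lt_of_one_div_lt_one_div hp' <|
    hpqr' ▸ lt_add_of_pos_right _ (by positivity)
  rw [eLpNorm_eq_eLpNorm' hr₁.ne' hr₂.ne, eLpNorm_eq_eLpNorm' hp0 hp, eLpNorm_eq_eLpNorm' hq0 hq]
  exact ENNReal.lintegral_Lp_mul_le_Lq_mul_Lr hr hrp hpqr' μ hF hG

theorem enn_tsum {X : Type*} [MeasurableSpace X] {μ : Measure X} {p : ℝ≥0∞} (hp : 1 ≤ p)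
    {F : ℕ → X → ℝ≥0∞} (hF : ∀ k, AEMeasurable (F k) μ) :
    eLpNorm (fun x => ∑' k, F k x) p μ ≤ ∑' k, eLpNorm (F k) p μ := by
  have hfin : ∀ N : ℕ, eLpNorm (fun x => ∑ k ∈ Finset.range N, F k x) p μ
      ≤ ∑' k, eLpNorm (F k) p μ := by
    intro N
    refine le_trans ?_ (ENNReal.sum_le_tsum (Finset.range N))
    have := eLpNorm_sum_le (f := F) (s := Finset.range N) (μ := μ) (p := p)
      (fun i _ => (hF i).aestronglyMeasurable) hp
    have e : (fun x => ∑ k ∈ Finset.range N, F k x) = ∑ k ∈ Finset.range N, F k := by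
      ext x; simp
    rw [e]
    exact this
  by_cases hpt : p = ∞
  · subst hpt
    rw [eLpNorm_exponent_top]
    refine essSup_le_of_ae_le _ ?_
    have : ∀ᵐ x ∂μ, ∀ N : ℕ, ∑ k ∈ Finset.range N, F k x ≤ ∑' k, eLpNorm (F k) ∞ μ := by
      rw [ae_all_iff]
      intro N
      have h1 := hfin N
      rw [eLpNorm_exponent_top] at h1
      filter_upwards [ae_le_eLpNormEssSup (f := (fun x => ∑ k ∈ Finset.range N, F k x)) (μ := μ)]
        with x hx
      exact le_trans hx h1
    filter_upwards [this] with x hx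
    simp only [enorm_eq_self]
    rw [ENNReal.tsum_eq_iSup_nat]
    exact iSup_le hx
  have hp0 : p ≠ 0 := (lt_of_lt_of_le one_pos hp).ne'
  have hp' : 0 < p.toReal := ENNReal.toReal_pos hp0 hpt
  rw [eLpNorm_eq_lintegral_rpow_enorm_toReal hp0 hpt]
  simp only [eLpNorm_eq_lintegral_rpow_enorm_toReal hp0 hpt, enorm_eq_self] at hfin ⊢
  rw [one_div, ENNReal.rpow_inv_le_iff hp']
  have : ∀ x, (∑' k, F k x) ^ p.toReal = ⨆ N : ℕ, (∑ k ∈ Finset.range N, F k x) ^ p.toReal := by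
    intro x
    rw [ENNReal.tsum_eq_iSup_nat]
    exact (ENNReal.orderIsoRpow p.toReal hp').map_iSup _
  simp_rw [this]
  rw [lintegral_iSup']
  · refine iSup_le fun N => ?_
    have := hfin N
    rwa [one_div, ENNReal.rpow_inv_le_iff hp'] at this
  · intro N
    exact (Finset.aemeasurable_fun_sum _ fun i _ => hF i).pow_const _
  · refine Filter.Eventually.of_forall fun x => ?_
    intro a b hab
    simp only
    gcongr

theorem enn_mixed {X Y : Type*} [MeasurableSpace X] [MeasurableSpace Y] {μ : Measure X}
    {ν : Measure Y} [SFinite μ] [IsFiniteMeasure ν] {B : X → Y → ℝ≥0∞}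
    (hB : Measurable (Function.uncurry B)) {t : ℝ} (ht : 0 < t) {p : ℝ≥0∞}
    (htp : ENNReal.ofReal t ≤ p) {C : ℝ≥0∞} (hC : ∀ y, eLpNorm (fun x => B x y) p μ ≤ C) :
    eLpNorm (fun x => (∫⁻ y, B x y ^ t ∂ν) ^ (1 / t)) p μ ≤ C * ν Set.univ ^ (1 / t) := by
  by_cases hpt : p = ∞
  · subst hpt
    rw [eLpNorm_exponent_top]
    refine essSup_le_of_ae_le _ ?_
    have h1 : ∀ᵐ x ∂μ, ∀ᵐ y ∂ν, B x y ≤ C := by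
      rw [Measure.ae_ae_comm]
      · refine Filter.Eventually.of_forall fun y => ?_
        have := hC y
        rw [eLpNorm_exponent_top] at this
        filter_upwards [ae_le_eLpNormEssSup (f := (fun x => B x y)) (μ := μ)] with x hx
        exact le_trans hx this
      · exact measurableSet_le hB measurable_const
    filter_upwards [h1] with x hx
    simp only [enorm_eq_self]
    calc (∫⁻ y, B x y ^ t ∂ν) ^ (1 / t) ≤ (∫⁻ y, C ^ t ∂ν) ^ (1 / t) := by
          gcongr 1
          refine lintegral_mono_ae ?_
          filter_upwards [hx] with y hy
          gcongr
      _ = C * ν Set.univ ^ (1 / t) := by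
          rw [lintegral_const, ENNReal.mul_rpow_of_nonneg _ _ (by positivity), ← ENNReal.rpow_mul]
          rw [mul_one_div_cancel ht.ne', ENNReal.rpow_one]
  have hp0 : p ≠ 0 := by
    rintro rfl
    simp at htp; linarith
  have hp' : 0 < p.toReal := ENNReal.toReal_pos hp0 hpt
  have htp' : t ≤ p.toReal := by
    rwa [ENNReal.ofReal_le_iff_le_toReal hpt] at htp
  set P := p.toReal with hP
  have h1 : ∀ x, (∫⁻ y, B x y ^ t ∂ν) ^ (1 / t) ≤
      (∫⁻ y, B x y ^ P ∂ν) ^ (1 / P) * ν Set.univ ^ (1 / t - 1 / P) := by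
    intro x
    exact eLpNorm'_le_eLpNorm'_mul_rpow_measure_univ (f := B x) (μ := ν) ht htp'
      (hB.comp measurable_prodMk_left).aestronglyMeasurable
  rw [eLpNorm_eq_lintegral_rpow_enorm_toReal hp0 hpt]
  simp only [enorm_eq_self]
  rw [← hP, one_div P, ENNReal.rpow_inv_le_iff hp']
  calc ∫⁻ x, ((∫⁻ y, B x y ^ t ∂ν) ^ (1 / t)) ^ P ∂μ
      ≤ ∫⁻ x, (∫⁻ y, B x y ^ P ∂ν) * (ν Set.univ ^ (1 / t - 1 / P)) ^ P ∂μ := by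
        refine lintegral_mono fun x => ?_
        refine (ENNReal.rpow_le_rpow (h1 x) hp'.le).trans ?_
        rw [ENNReal.mul_rpow_of_nonneg _ _ hp'.le, ← ENNReal.rpow_mul, one_div_mul_cancel hp'.ne',
          ENNReal.rpow_one]
    _ = (∫⁻ y, ∫⁻ x, B x y ^ P ∂μ ∂ν) * (ν Set.univ ^ (1 / t - 1 / P)) ^ P := by
        rw [lintegral_mul_const, lintegral_lintegral_swap]
        · exact (hB.pow_const _).aemeasurable
        · exact (hB.pow_const P).lintegral_prod_right'
    _ ≤ (∫⁻ y, C ^ P ∂ν) * (ν Set.univ ^ (1 / t - 1 / P)) ^ P := by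
        gcongr with y
        have := hC y
        rw [eLpNorm_eq_lintegral_rpow_enorm_toReal hp0 hpt] at this
        simp only [enorm_eq_self] at this
        rwa [← hP, one_div P, ENNReal.rpow_inv_le_iff hp'] at this
    _ = (C * ν Set.univ ^ (1 / t)) ^ P := by
        rw [lintegral_const, ENNReal.mul_rpow_of_nonneg _ _ hp'.le, mul_assoc]
        congr 1
        by_cases h0 : ν Set.univ = 0
        · rw [h0, zero_mul, ENNReal.zero_rpow_of_pos (by positivity),
            ENNReal.zero_rpow_of_pos hp']
        rw [← ENNReal.rpow_mul, ← ENNReal.rpow_mul]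
        nth_rewrite 1 [← ENNReal.rpow_one (ν Set.univ)]
        rw [← ENNReal.rpow_add _ _ h0 (measure_ne_top _ _)]
        congr 1
        field_simp
        ring

theorem caratheodory_ae {X W : Type*} [MeasurableSpace X] {μ : Measure X}
    [MetricSpace W] [SecondCountableTopology W] [MeasurableSpace W]
    [OpensMeasurableSpace W] {A : X → W → ℂ}
    (hc : ∀ x, Continuous (A x)) (hm : ∀ w, AEStronglyMeasurable (fun x => A x w) μ) :
    ∃ A' : X → W → ℂ, Measurable (Function.uncurry A') ∧ ∀ᵐ x ∂μ, ∀ w, A x w = A' x w := by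
  rcases isEmpty_or_nonempty W with hW | hW
  · exact ⟨A, measurable_of_empty _, Filter.Eventually.of_forall fun x w => (hW.false w).elim⟩
  let d := TopologicalSpace.denseSeq W
  have hd : DenseRange d := TopologicalSpace.denseRange_denseSeq W
  let N : Set X := toMeasurable μ {x | ¬ ∀ i, A x (d i) = (hm (d i)).mk _ x}
  have hN : MeasurableSet N := measurableSet_toMeasurable _ _
  have hN0 : μ N = 0 := by
    rw [measure_toMeasurable]
    have : ∀ᵐ x ∂μ, ∀ i, A x (d i) = (hm (d i)).mk _ x := by
      rw [ae_all_iff]; intro i; exact (hm (d i)).ae_eq_mk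
    exact this
  have hNs : ∀ x, x ∉ N → ∀ i, A x (d i) = (hm (d i)).mk _ x := by
    intro x hx
    by_contra h
    exact hx (subset_toMeasurable _ _ h)
  refine ⟨fun x w => if x ∈ N then 0 else A x w, ?_, ?_⟩
  · have hcont : ∀ x, Continuous (fun w => if x ∈ N then (0:ℂ) else A x w) := by
      intro x
      by_cases hx : x ∈ N
      · simp [hx]; exact continuous_const
      · simp [hx]; exact hc x
    have hmeasd : ∀ i, Measurable (fun x => if x ∈ N then (0:ℂ) else A x (d i)) := by
      intro i
      have : (fun x => if x ∈ N then (0:ℂ) else A x (d i)) =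
          fun x => if x ∈ N then (0:ℂ) else (hm (d i)).mk _ x := by
        ext x
        by_cases hx : x ∈ N
        · simp [hx]
        · simp [hx, hNs x hx i]
      rw [this]
      exact Measurable.ite hN measurable_const (hm (d i)).stronglyMeasurable_mk.measurable
    have hmeas : ∀ w, Measurable (fun x => if x ∈ N then (0:ℂ) else A x w) := by
      intro w
      have hw : w ∈ closure (Set.range d) := hd w
      rw [mem_closure_iff_seq_limit] at hw
      obtain ⟨u, hu, hul⟩ := hw
      choose i hi using hu
      refine measurable_of_tendsto_metrizable (f := fun k x => if x ∈ N then (0:ℂ) else A x (u k)) 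
        (fun k => ?_) ?_
      · rw [← hi k]; exact hmeasd _
      · rw [tendsto_pi_nhds]
        intro x
        exact ((hcont x).tendsto w).comp hul
    have := measurable_uncurry_of_continuous_of_measurable
      (u := fun w x => if x ∈ N then (0:ℂ) else A x w) hcont hmeas
    exact this.comp measurable_swap
  · have : ∀ᵐ x ∂μ, x ∉ N := measure_eq_zero_iff_ae_notMem.mp hN0
    filter_upwards [this] with x hx w
    simp [hx]

/-! ### Fourier transform facts -/

open scoped FourierTransform in
theorem ft_eq_fourier {n : ℕ} (f : En n → ℂ) (ξ : En n) :
    ft f ξ = 𝓕 f ((2 * π)⁻¹ • ξ) := by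
  rw [Real.fourier_eq']
  unfold ft
  congr 1
  ext y
  rw [smul_eq_mul, inner_smul_right]
  congr 2
  have h : (-2 * π * ((2 * π)⁻¹ * ⟪y, ξ⟫) : ℝ) = - ⟪y, ξ⟫ := by
    field_simp
  rw [h]
  push_cast
  ring

theorem norm_ft_le {n : ℕ} (f : En n → ℂ) (ξ : En n) : ‖ft f ξ‖ₑ ≤ ∫⁻ y, ‖f y‖ₑ := by
  unfold ft
  refine (enorm_integral_le_lintegral_enorm _).trans (le_of_eq ?_)
  congr 1
  ext y
  rw [enorm_mul]
  have : ‖Complex.exp (-(Complex.I * Complex.ofReal ⟪y, ξ⟫))‖ₑ = 1 := by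
    rw [← ofReal_norm, Complex.norm_exp]
    simp
  rw [this, one_mul]

theorem ft_continuous {n : ℕ} {f : En n → ℂ} (hf : Integrable f) : Continuous (ft f) := by
  unfold ft
  refine continuous_of_dominated (bound := fun y => ‖f y‖) ?_ ?_ hf.norm ?_
  · intro ξ
    refine AEStronglyMeasurable.mul ?_ hf.aestronglyMeasurable
    exact Continuous.aestronglyMeasurable (by fun_prop)
  · intro ξ
    refine Filter.Eventually.of_forall fun y => ?_
    rw [norm_mul, Complex.norm_exp]
    simp
  · refine Filter.Eventually.of_forall fun y => ?_
    fun_prop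

open scoped FourierTransform in
theorem plancherel_ft {n : ℕ} {G : En n → ℂ} (hG : ContDiff ℝ (⊤ : ℕ∞) G)
    (hc : HasCompactSupport G) :
    ∫⁻ y, ‖ft G y‖ₑ ^ (2 : ℝ) = ENNReal.ofReal ((2 * π) ^ n) * ∫⁻ y, ‖G y‖ₑ ^ (2 : ℝ) := by
  let g : 𝓢(En n, ℂ) := hc.toSchwartzMap hG
  have hg : (g : En n → ℂ) = G := by ext; simp [g]
  have key : ∀ h : 𝓢(En n, ℂ), ∫⁻ y, ‖h y‖ₑ ^ (2 : ℝ) = ENNReal.ofReal (∫ y, ‖h y‖ ^ 2) := by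
    intro h
    rw [ofReal_integral_eq_lintegral_ofReal]
    · congr 1; ext y
      rw [ENNReal.ofReal_pow (norm_nonneg _), ofReal_norm]
      norm_cast
    · exact (h.memLp 2 volume).integrable_norm_pow (by norm_num)
    · exact Filter.Eventually.of_forall fun y => by positivity
  have h1 : ∫⁻ y, ‖ft G y‖ₑ ^ (2 : ℝ) =
      ENNReal.ofReal ((2 * π) ^ n) * ∫⁻ y, ‖(𝓕 g : 𝓢(En n, ℂ)) y‖ₑ ^ (2 : ℝ) := by
    have : ∀ y, ft G y = (𝓕 g : 𝓢(En n, ℂ)) ((2 * π)⁻¹ • y) := by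
      intro y; rw [ft_eq_fourier, SchwartzMap.fourier_coe, hg]
    simp_rw [this]
    have hm : Measurable fun y => ‖(𝓕 g : 𝓢(En n, ℂ)) y‖ₑ ^ (2 : ℝ) :=
      ((𝓕 g : 𝓢(En n, ℂ)).continuous.measurable.enorm).pow_const _
    have hm2 : Measurable (fun y : En n => (2 * π)⁻¹ • y) := measurable_const_smul _
    rw [← lintegral_map hm hm2, Measure.map_addHaar_smul _ (by positivity)]
    rw [lintegral_smul_measure]
    simp only [smul_eq_mul]
    congr 2
    rw [finrank_euclideanSpace, Fintype.card_fin, inv_pow, inv_inv, abs_of_pos (by positivity)]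
  rw [h1, key, SchwartzMap.integral_norm_sq_fourier, ← key, hg]

/-- Estimate for one level. -/
theorem hy_level {n : ℕ} {s s' : ℝ} (hs : 1 < s) (hs2 : s < 2) (hss : s' = s / (s - 1))
    {G : En n → ℂ} (hG : ContDiff ℝ (⊤ : ℕ∞) G) (hc : HasCompactSupport G) {B V : ℝ}
    (hB : 0 ≤ B) (hV : 0 ≤ V) (hGB : ∀ y, ‖G y‖ ≤ B)
    (hGV : volume (Function.support G) ≤ ENNReal.ofReal V) :
    eLpNorm (ft G) (ENNReal.ofReal s') volume ≤
      ENNReal.ofReal (((2 * π) ^ n) ^ (1 / s') * B * V ^ (1 / s)) := by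
  have hs1 : 0 < s - 1 := by linarith
  have hs' : 2 < s' := by
    rw [hss, lt_div_iff₀ hs1]; linarith
  have hs'0 : 0 < s' := by linarith
  have hpow : ∀ u : ℝ, 0 < u → ∫⁻ y, ‖G y‖ₑ ^ u ≤ ENNReal.ofReal (B ^ u * V) := by
    intro u hu
    have : ∫⁻ y, ‖G y‖ₑ ^ u = ∫⁻ y in Function.support G, ‖G y‖ₑ ^ u := by
      rw [setLIntegral_eq_of_support_subset]
      intro y hy
      simp only [Function.mem_support, ne_eq] at hy ⊢
      intro h; apply hy; simp [h, hu]
    rw [this]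
    calc ∫⁻ y in Function.support G, ‖G y‖ₑ ^ u
        ≤ ∫⁻ y in Function.support G, ENNReal.ofReal (B ^ u) := by
          refine lintegral_mono fun y => ?_
          rw [← ofReal_norm, ENNReal.ofReal_rpow_of_nonneg (norm_nonneg _) hu.le]
          apply ENNReal.ofReal_le_ofReal
          exact Real.rpow_le_rpow (norm_nonneg _) (hGB y) hu.le
      _ = ENNReal.ofReal (B ^ u) * volume (Function.support G) := by simp
      _ ≤ ENNReal.ofReal (B ^ u) * ENNReal.ofReal V := by gcongr
      _ = _ := by rw [← ENNReal.ofReal_mul (by positivity)]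
  have hsup : ∀ y, ‖ft G y‖ₑ ≤ ENNReal.ofReal (B * V) := by
    intro y
    refine (norm_ft_le G y).trans ?_
    have := hpow 1 one_pos
    simpa using this
  have h2 : ∫⁻ y, ‖ft G y‖ₑ ^ (2 : ℝ) ≤ ENNReal.ofReal ((2 * π) ^ n * (B ^ (2 : ℝ) * V)) := by
    rw [plancherel_ft hG hc, ENNReal.ofReal_mul (by positivity)]
    gcongr
    exact hpow 2 two_pos
  rw [eLpNorm_eq_lintegral_rpow_enorm_toReal (by simpa using hs'0) (by simp),
    ENNReal.toReal_ofReal hs'0.le, one_div, ENNReal.rpow_inv_le_iff hs'0]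
  calc ∫⁻ y, ‖ft G y‖ₑ ^ s' = ∫⁻ y, ‖ft G y‖ₑ ^ (s' - 2) * ‖ft G y‖ₑ ^ (2 : ℝ) := by
        congr 1; ext y
        rw [← ENNReal.rpow_add_of_nonneg _ _ (by linarith) (by norm_num)]
        congr 1; ring
    _ ≤ ∫⁻ y, ENNReal.ofReal (B * V) ^ (s' - 2) * ‖ft G y‖ₑ ^ (2 : ℝ) := by
        refine lintegral_mono fun y => ?_
        gcongr
        exact hsup y
    _ = ENNReal.ofReal (B * V) ^ (s' - 2) * ∫⁻ y, ‖ft G y‖ₑ ^ (2 : ℝ) := by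
        rw [lintegral_const_mul]
        have : Integrable G := hG.continuous.integrable_of_hasCompactSupport hc
        exact ((ft_continuous this).measurable.enorm).pow_const _
    _ ≤ ENNReal.ofReal (B * V) ^ (s' - 2) * ENNReal.ofReal ((2 * π) ^ n * (B ^ (2 : ℝ) * V)) := by
        gcongr
    _ = _ := by
        rw [ENNReal.ofReal_rpow_of_nonneg (by positivity) (by linarith),
          ENNReal.ofReal_rpow_of_nonneg (by positivity) (by linarith),
          ← ENNReal.ofReal_mul (by positivity)]
        congr 1
        rw [Real.mul_rpow (by positivity) (by positivity), Real.mul_rpow (by positivity) (by positivity),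
          Real.mul_rpow (by positivity) (by positivity), ← Real.rpow_mul (by positivity), ← Real.rpow_mul hV,
          inv_mul_cancel₀ hs'0.ne', Real.rpow_one]
        have e1 : 1 / s * s' = (s' - 2) + 1 := by
          rw [hss]; field_simp; ring
        rw [e1, Real.rpow_add_of_nonneg hV (by linarith) (by norm_num), Real.rpow_one]
        have e2 : s' = (s' - 2) + 2 := by ring
        conv_rhs => rw [e2]
        rw [Real.rpow_add_of_nonneg hB (by linarith) (by norm_num)]
        have e3 : s' - 2 + 2 - 2 = s' - 2 := by ring
        rw [e3]
        ring

/-- A smooth cutoff on the line, equal to one on `u ≤ 1` and to zero on `u ≥ 4`. -/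
def lchi (u : ℝ) : ℝ := 1 - Real.smoothTransition ((u - 1) / 3)

theorem lchi_contDiff : ContDiff ℝ (⊤ : ℕ∞) lchi := by
  unfold lchi
  exact contDiff_const.sub (Real.smoothTransition.contDiff.comp (by fun_prop))

theorem lchi_one {u : ℝ} (hu : u ≤ 1) : lchi u = 1 := by
  unfold lchi
  rw [Real.smoothTransition.zero_of_nonpos (by linarith)]; simp

theorem lchi_zero {u : ℝ} (hu : 4 ≤ u) : lchi u = 0 := by
  unfold lchi
  rw [Real.smoothTransition.one_of_one_le (by linarith)]; simp

theorem lchi_nonneg (u : ℝ) : 0 ≤ lchi u := by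
  unfold lchi; linarith [Real.smoothTransition.le_one ((u - 1) / 3)]

theorem lchi_le_one (u : ℝ) : lchi u ≤ 1 := by
  unfold lchi; linarith [Real.smoothTransition.nonneg ((u - 1) / 3)]

theorem ft_zero_of {n : ℕ} {H : En n → ℂ} {t : ℝ} (ht : 0 < t) (hH : Measurable H)
    (h0 : ∫⁻ y, ‖H y‖ₑ ^ t = 0) (z : En n) : ft H z = 0 := by
  rw [lintegral_eq_zero_iff (hH.enorm.pow_const _)] at h0
  unfold ft
  refine integral_eq_zero_of_ae ?_
  filter_upwards [h0] with y hy
  have : H y = 0 := by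
    simpa [ht, ht.le, not_lt.mpr ht.le] using hy
  simp [this]

/-- Lossy Hausdorff-Young inequality. -/
theorem hy_main {n : ℕ} {s s' t : ℝ} (hs : 1 < s) (hs2 : s < 2) (hss : s' = s / (s - 1))
    (hst : s < t) :
    ∃ C : ℝ, 0 < C ∧ ∀ (H : En n → ℂ) (V N : ℝ), ContDiff ℝ (⊤ : ℕ∞) H → HasCompactSupport H →
      0 < V → 0 < N → volume (Function.support H) ≤ ENNReal.ofReal V →
      ∫⁻ y, ‖H y‖ₑ ^ t ≤ ENNReal.ofReal (N ^ t) →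
      eLpNorm (ft H) (ENNReal.ofReal s') volume ≤ ENNReal.ofReal (C * V ^ (1 / s - 1 / t) * N) := by
  set K : ℝ := ((2 * π) ^ n) ^ (1 / s') with hK
  have hKpos : 0 < K := by positivity
  set θ : ℝ := 2 ^ (1 - t / s) with hθ
  have hs0 : 0 < s := by linarith
  have ht0 : 0 < t := by linarith
  have hθ1 : θ < 1 := by
    apply Real.rpow_lt_one_of_one_lt_of_neg one_lt_two
    rw [sub_neg, lt_div_iff₀ hs0]; linarith
  have hθ0 : 0 < θ := by positivity
  have h1θ : 0 < 1 - θ := by linarith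
  refine ⟨K * (2 + 4 * (1 - θ)⁻¹), by positivity, ?_⟩
  intro H V N hH hHc hV hN hHV hHN
  have hs1 : 0 < s - 1 := by linarith
  have hs' : 2 < s' := by
    rw [hss, lt_div_iff₀ hs1]; linarith
  set A : ℝ := N * V ^ (-(1 / t)) with hA
  have hApos : 0 < A := by positivity
  have hAt : A ^ t = N ^ t / V := by
    rw [hA, Real.mul_rpow hN.le (by positivity), ← Real.rpow_mul hV.le]
    rw [show -(1 / t) * t = -1 by field_simp, Real.rpow_neg_one]
    rfl
  -- bounded
  obtain ⟨b, hb⟩ := hHc.exists_bound_of_continuous hH.continuous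
  let e : ℕ → En n → ℝ := fun j y => lchi (‖H y‖ ^ 2 / (4 ^ j * A ^ 2))
  let G : ℕ → En n → ℂ := fun j y => (e j y : ℂ) * H y
  have he0 : ∀ j y, 0 ≤ e j y := fun j y => lchi_nonneg _
  have he1 : ∀ j y, e j y ≤ 1 := fun j y => lchi_le_one _
  have hGs : ∀ j, ContDiff ℝ (⊤ : ℕ∞) (G j) := by
    intro j
    refine ContDiff.mul ?_ hH
    refine Complex.ofRealCLM.contDiff.comp ?_
    refine lchi_contDiff.comp ?_
    exact (hH.norm_sq ℝ).div_const _
  have hGc : ∀ j, HasCompactSupport (G j) := fun j => hHc.mul_left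
  have hGint : ∀ j, Integrable (G j) :=
    fun j => (hGs j).continuous.integrable_of_hasCompactSupport (hGc j)
  have h4 : ∀ j : ℕ, (4 : ℝ) ^ j = (2 ^ j) ^ 2 := by
    intro j; rw [← pow_mul, mul_comm, pow_mul]; norm_num
  have hvan : ∀ j y, 2 * 2 ^ j * A ≤ ‖H y‖ → e j y = 0 := by
    intro j y hy
    apply lchi_zero
    rw [le_div_iff₀ (by positivity), h4]
    calc 4 * ((2 ^ j) ^ 2 * A ^ 2) = (2 * 2 ^ j * A) ^ 2 := by ring
      _ ≤ _ := by gcongr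
  have hone : ∀ j y, ‖H y‖ ≤ 2 ^ j * A → e j y = 1 := by
    intro j y hy
    apply lchi_one
    rw [div_le_one (by positivity), h4]
    calc ‖H y‖ ^ 2 ≤ (2 ^ j * A) ^ 2 := by gcongr
      _ = _ := by ring
  obtain ⟨J, hJ⟩ : ∃ J : ℕ, b ≤ 2 ^ J * A := by
    obtain ⟨J, hJ⟩ := pow_unbounded_of_one_lt (b / A) (one_lt_two (α := ℝ))
    exact ⟨J, by rw [← div_le_iff₀ hApos]; exact hJ.le⟩
  have hGJ : H = G J := by
    ext y
    simp only [G]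
    rw [hone J y ((hb y).trans hJ)]; simp
  -- level zero
  have hL0 : eLpNorm (ft (G 0)) (ENNReal.ofReal s') volume ≤
      ENNReal.ofReal (K * (2 * A) * V ^ (1 / s)) := by
    refine hy_level hs hs2 hss (hGs 0) (hGc 0) (by positivity) hV.le ?_ ?_
    · intro y
      by_cases hy : 2 * 2 ^ 0 * A ≤ ‖H y‖
      · simp only [G, hvan 0 y hy]; simp; positivity
      · simp only [G, norm_mul, Complex.norm_real, Real.norm_eq_abs, abs_of_nonneg (he0 0 y)]
        push Not at hy
        calc e 0 y * ‖H y‖ ≤ 1 * ‖H y‖ := by gcongr; exact he1 0 y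
          _ ≤ 2 * A := by linarith
    · refine (measure_mono ?_).trans hHV
      intro y hy
      simp only [G, Function.mem_support, ne_eq, mul_eq_zero, not_or] at hy ⊢
      exact hy.2
  have hLj : ∀ j : ℕ, eLpNorm (ft (G (j + 1) - G j)) (ENNReal.ofReal s') volume ≤
      ENNReal.ofReal (K * (4 * 2 ^ j * A) * (V * (2 ^ j) ^ (-t)) ^ (1 / s)) := by
    intro j
    refine hy_level hs hs2 hss ((hGs _).sub (hGs _)) ((hGc _).sub (hGc _)) (by positivity)
      (by positivity) ?_ ?_
    · intro y
      simp only [G, Pi.sub_apply]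
      rw [← sub_mul, ← Complex.ofReal_sub, norm_mul, Complex.norm_real]
      by_cases hy : 4 * 2 ^ j * A ≤ ‖H y‖
      · rw [hvan (j + 1) y (by rw [pow_succ]; linarith), hvan j y ?_]
        · simp; positivity
        · refine le_trans ?_ hy
          gcongr; norm_num
      · push Not at hy
        have : ‖e (j + 1) y - e j y‖ ≤ 1 := by
          rw [Real.norm_eq_abs, abs_le]
          constructor <;> linarith [he0 j y, he0 (j+1) y, he1 j y, he1 (j+1) y]
        calc ‖e (j + 1) y - e j y‖ * ‖H y‖ ≤ 1 * ‖H y‖ := by gcongr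
          _ ≤ _ := by linarith
    · have hsub : Function.support (G (j + 1) - G j) ⊆
          {y | ENNReal.ofReal ((2 ^ j * A) ^ t) ≤ ‖H y‖ₑ ^ t} := by
        intro y hy
        by_contra hcon
        simp only [Set.mem_ofPred_eq, not_le] at hcon
        have hlt : ‖H y‖ ≤ 2 ^ j * A := by
          rw [← ofReal_norm, ENNReal.ofReal_rpow_of_nonneg (norm_nonneg _) ht0.le] at hcon
          by_contra h
          push Not at h
          have := Real.rpow_le_rpow (by positivity) h.le ht0.le
          exact absurd hcon (not_lt.mpr (ENNReal.ofReal_le_ofReal this))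
        apply hy
        simp only [G, Pi.sub_apply]
        rw [hone j y hlt, hone (j + 1) y ?_]
        · simp
        · refine hlt.trans ?_
          gcongr
          · norm_num
          · simp
      refine (measure_mono hsub).trans ?_
      have hpos : 0 < (2 ^ j * A) ^ t := by positivity
      refine (meas_ge_le_lintegral_div ((hH.continuous.measurable.enorm).pow_const t).aemeasurable
        (by simpa using hpos) (by simp)).trans ?_
      rw [ENNReal.div_le_iff (by simpa using hpos) (by simp)]
      refine hHN.trans ?_
      rw [← ENNReal.ofReal_mul (by positivity)]
      apply ENNReal.ofReal_le_ofReal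
      rw [Real.mul_rpow (by positivity) hApos.le, hAt]
      rw [Real.rpow_neg (by positivity)]
      apply le_of_eq
      field_simp
  have hsum : ∀ J : ℕ, eLpNorm (ft (G J)) (ENNReal.ofReal s') volume ≤
      ENNReal.ofReal (K * (2 * A) * V ^ (1 / s)) + ∑ j ∈ Finset.range J,
        ENNReal.ofReal (K * (4 * 2 ^ j * A) * (V * (2 ^ j) ^ (-t)) ^ (1 / s)) := by
    intro J
    induction J with
    | zero => simpa using hL0
    | succ J ih =>
      have e1 : ft (G (J + 1)) = ft (G J) + ft (G (J + 1) - G J) := by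
        ext z
        simp only [Pi.add_apply]
        unfold ft
        rw [← integral_add]
        · congr 1; ext y; simp only [Pi.sub_apply]; ring
        · refine (hGint J).bdd_mul (c := 1) (Continuous.aestronglyMeasurable (by fun_prop)) ?_
          refine Filter.Eventually.of_forall fun y => ?_
          rw [Complex.norm_exp]; simp
        · refine ((hGint (J+1)).sub (hGint J)).bdd_mul (c := 1)
            (Continuous.aestronglyMeasurable (by fun_prop)) ?_
          refine Filter.Eventually.of_forall fun y => ?_
          rw [Complex.norm_exp]; simp
      rw [e1]
      refine (eLpNorm_add_le (ft_continuous (hGint J)).aestronglyMeasurable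
        (ft_continuous ((hGint (J+1)).sub (hGint J))).aestronglyMeasurable ?_).trans ?_
      · rw [ENNReal.one_le_ofReal]; linarith
      · rw [Finset.sum_range_succ, ← add_assoc]
        exact add_le_add ih (hLj J)
  rw [hGJ]
  refine (hsum J).trans ?_
  have hterm : ∀ j : ℕ, K * (4 * 2 ^ j * A) * (V * (2 ^ j) ^ (-t)) ^ (1 / s) =
      4 * K * A * V ^ (1 / s) * θ ^ j := by
    intro j
    rw [Real.mul_rpow hV.le (by positivity), hθ, ← Real.rpow_natCast, ← Real.rpow_natCast,
      ← Real.rpow_mul (by positivity), ← Real.rpow_mul (by positivity), ← Real.rpow_mul (by positivity)]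
    have : (2:ℝ) ^ ((1 - t / s) * (j:ℝ)) = 2 ^ (j:ℝ) * 2 ^ ((j:ℝ) * -t * (1 / s)) := by
      rw [← Real.rpow_add two_pos]; congr 1; ring
    rw [this]; ring
  rw [← ENNReal.ofReal_sum_of_nonneg (fun j _ => by positivity), ← ENNReal.ofReal_add (by positivity)
    (Finset.sum_nonneg fun j _ => by positivity)]
  apply ENNReal.ofReal_le_ofReal
  simp_rw [hterm]
  rw [← Finset.mul_sum]
  have hgeo : ∑ j ∈ Finset.range J, θ ^ j ≤ (1 - θ)⁻¹ := by
    rw [← tsum_geometric_of_lt_one hθ0.le hθ1]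
    exact (summable_geometric_of_lt_one hθ0.le hθ1).sum_le_tsum _ (fun j _ => by positivity)
  have hAV : A * V ^ (1 / s) = V ^ (1 / s - 1 / t) * N := by
    rw [hA, sub_eq_add_neg, Real.rpow_add hV]; ring
  calc K * (2 * A) * V ^ (1 / s) + 4 * K * A * V ^ (1 / s) * ∑ j ∈ Finset.range J, θ ^ j
      ≤ K * (2 * A) * V ^ (1 / s) + 4 * K * A * V ^ (1 / s) * (1 - θ)⁻¹ := by gcongr
    _ = K * (2 + 4 * (1 - θ)⁻¹) * (A * V ^ (1 / s)) := by ring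
    _ = _ := by rw [hAV]; ring

theorem hy_pair {n : ℕ} {s t : ℝ} (hs : 1 ≤ s) (hs2 : s < 2) (hst : s ≤ t)
    (hst' : s = 1 ∨ s < t) :
    ∃ C : ℝ, 0 < C ∧ ∀ (H : En n → ℂ) (V : ℝ) (φ : En n → ℝ≥0∞), ContDiff ℝ (⊤ : ℕ∞) H →
      HasCompactSupport H → 0 < V → volume (Function.support H) ≤ ENNReal.ofReal V →
      Measurable φ →
      ∫⁻ z, ‖ft H z‖ₑ * φ z ≤ ENNReal.ofReal (C * V ^ (1 / s - 1 / t)) *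
        (∫⁻ y, ‖H y‖ₑ ^ t) ^ (1 / t) * (∫⁻ z, φ z ^ s) ^ (1 / s) := by
  have ht0 : 0 < t := by linarith
  by_cases hs1 : s = 1
  · subst hs1
    refine ⟨1, one_pos, ?_⟩
    intro H V φ hH hHc hV hHV hφ
    have h1 : ∀ z, ‖ft H z‖ₑ ≤ ENNReal.ofReal (1 * V ^ (1 / (1:ℝ) - 1 / t)) *
        (∫⁻ y, ‖H y‖ₑ ^ t) ^ (1 / t) := by
      intro z
      refine (norm_ft_le H z).trans ?_
      have e1 : ∀ u : ℝ, 0 < u → ∫⁻ y, ‖H y‖ₑ ^ u = ∫⁻ y in Function.support H, ‖H y‖ₑ ^ u := by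
        intro u hu
        rw [setLIntegral_eq_of_support_subset]
        intro y hy
        simp only [Function.mem_support, ne_eq] at hy ⊢
        intro h; apply hy; simp [h, hu]
      have h2 := eLpNorm'_le_eLpNorm'_mul_rpow_measure_univ (f := H)
        (μ := volume.restrict (Function.support H)) one_pos hst
        hH.continuous.aestronglyMeasurable
      unfold eLpNorm' at h2
      rw [← e1 1 one_pos, ← e1 t ht0] at h2
      simp only [ENNReal.rpow_one, one_div_one, Measure.restrict_apply_univ] at h2
      refine h2.trans ?_
      rw [mul_comm, one_mul]
      gcongr
      rw [← ENNReal.ofReal_rpow_of_pos hV]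
      rw [show (1:ℝ) / 1 - 1 / t = 1 - 1 / t by norm_num]
      refine ENNReal.rpow_le_rpow hHV ?_
      rw [sub_nonneg, div_le_iff₀ ht0]; linarith
    calc ∫⁻ z, ‖ft H z‖ₑ * φ z ≤ ∫⁻ z, ENNReal.ofReal (1 * V ^ (1 / (1:ℝ) - 1 / t)) *
        (∫⁻ y, ‖H y‖ₑ ^ t) ^ (1 / t) * φ z := by
          refine lintegral_mono fun z => ?_
          gcongr
          exact h1 z
      _ = _ := by rw [lintegral_const_mul _ hφ]; simp
  have hs1' : 1 < s := lt_of_le_of_ne hs (Ne.symm hs1)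
  have hst2 : s < t := by tauto
  obtain ⟨C, hC, hmain⟩ := hy_main (n := n) hs1' hs2 rfl hst2
  refine ⟨C, hC, ?_⟩
  intro H V φ hH hHc hV hHV hφ
  set N := (∫⁻ y, ‖H y‖ₑ ^ t) ^ (1 / t) with hN
  have hHi : Integrable H := hH.continuous.integrable_of_hasCompactSupport hHc
  by_cases hN0 : N = 0
  · have : ∫⁻ y, ‖H y‖ₑ ^ t = 0 := by
      rw [hN] at hN0
      simpa [ht0, not_lt.mpr ht0.le] using hN0
    simp [ft_zero_of ht0 hH.continuous.measurable this]
  have hNt : N ≠ ⊤ := by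
    have := (hH.continuous.memLp_of_hasCompactSupport (p := ENNReal.ofReal t) (μ := volume) hHc).2
    rw [eLpNorm_eq_lintegral_rpow_enorm_toReal (by simpa using ht0) (by simp),
      ENNReal.toReal_ofReal ht0.le] at this
    exact this.ne
  have hNr : 0 < N.toReal := ENNReal.toReal_pos hN0 hNt
  have h1 := hmain H V N.toReal hH hHc hV hNr hHV (by
    rw [← ENNReal.ofReal_rpow_of_pos hNr, ENNReal.ofReal_toReal hNt, hN, ← ENNReal.rpow_mul,
      one_div_mul_cancel ht0.ne', ENNReal.rpow_one])
  have hs0 : 0 < s - 1 := by linarith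
  have hs'0 : 0 < s / (s - 1) := by positivity
  rw [ENNReal.ofReal_mul (by positivity), ENNReal.ofReal_toReal hNt,
    eLpNorm_eq_lintegral_rpow_enorm_toReal (by simpa using hs'0) (by simp),
    ENNReal.toReal_ofReal hs'0.le] at h1
  have hconj : (s / (s - 1)).HolderConjugate s := by
    rw [Real.holderConjugate_comm, Real.holderConjugate_iff]
    refine ⟨hs1', ?_⟩
    field_simp; ring
  refine (ENNReal.lintegral_mul_le_Lp_mul_Lq volume hconj
    (ft_continuous hHi).measurable.enorm.aemeasurable hφ.aemeasurable).trans ?_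
  gcongr

/-! ### The operators `1 - l² ∂_v²` -/

section dops
variable {E : Type*} [NormedAddCommGroup E] [NormedSpace ℝ E]

/-- Directional derivative. -/
def dv (v : E) (G : E → ℂ) : E → ℂ := fun x => fderiv ℝ G x v

/-- The operator `1 - l² ∂_v²`. -/
def Dop (l : ℝ) (v : E) (G : E → ℂ) : E → ℂ := fun x => G x - ((l ^ 2 : ℝ) : ℂ) * dv v (dv v G) x

/-- Composition of the operators `Dop` along a list of directions. -/
def DopL (l : ℝ) (L : List E) (G : E → ℂ) : E → ℂ := L.foldr (Dop l) G

theorem DopL_nil (l : ℝ) (G : E → ℂ) : DopL l [] G = G := rfl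

theorem DopL_cons (l : ℝ) (v : E) (L : List E) (G : E → ℂ) :
    DopL l (v :: L) G = Dop l v (DopL l L G) := rfl

theorem dv_contDiff {v : E} {G : E → ℂ} (hG : ContDiff ℝ (⊤ : ℕ∞) G) :
    ContDiff ℝ (⊤ : ℕ∞) (dv v G) := by
  unfold dv
  have : ContDiff ℝ (⊤ : ℕ∞) (fderiv ℝ G) := hG.fderiv_right (by simp)
  exact this.clm_apply contDiff_const

theorem Dop_contDiff {l : ℝ} {v : E} {G : E → ℂ} (hG : ContDiff ℝ (⊤ : ℕ∞) G) :
    ContDiff ℝ (⊤ : ℕ∞) (Dop l v G) := by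
  unfold Dop
  exact hG.sub (contDiff_const.mul (dv_contDiff (dv_contDiff hG)))

theorem DopL_contDiff {l : ℝ} {L : List E} {G : E → ℂ} (hG : ContDiff ℝ (⊤ : ℕ∞) G) :
    ContDiff ℝ (⊤ : ℕ∞) (DopL l L G) := by
  induction L with
  | nil => exact hG
  | cons v L ih => exact Dop_contDiff ih

theorem dv_tsupport (v : E) (G : E → ℂ) : tsupport (dv v G) ⊆ tsupport G :=
  tsupport_fderiv_apply_subset ℝ v

theorem Dop_tsupport (l : ℝ) (v : E) (G : E → ℂ) : tsupport (Dop l v G) ⊆ tsupport G := by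
  refine closure_minimal ?_ (isClosed_tsupport G)
  intro x hx
  by_contra h
  apply hx
  have h1 : x ∉ tsupport (dv v (dv v G)) := fun h' => h (dv_tsupport v G (dv_tsupport v _ h'))
  unfold Dop
  rw [image_eq_zero_of_notMem_tsupport h, image_eq_zero_of_notMem_tsupport h1]; simp

theorem DopL_tsupport (l : ℝ) (L : List E) (G : E → ℂ) : tsupport (DopL l L G) ⊆ tsupport G := by
  induction L with
  | nil => exact subset_rfl
  | cons v L ih => exact (Dop_tsupport l v _).trans ih

theorem dv_hcs {v : E} {G : E → ℂ} (hc : HasCompactSupport G) : HasCompactSupport (dv v G) :=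
  hc.of_isClosed_subset (isClosed_tsupport _) (dv_tsupport v G)

theorem Dop_hcs {l : ℝ} {v : E} {G : E → ℂ} (hc : HasCompactSupport G) :
    HasCompactSupport (Dop l v G) :=
  hc.of_isClosed_subset (isClosed_tsupport _) (Dop_tsupport l v G)

theorem DopL_hcs {l : ℝ} {L : List E} {G : E → ℂ} (hc : HasCompactSupport G) :
    HasCompactSupport (DopL l L G) :=
  hc.of_isClosed_subset (isClosed_tsupport _) (DopL_tsupport l L G)

end dops

theorem dv_slice_left {n : ℕ} {F : En n × En n → ℂ} (hF : ContDiff ℝ (⊤ : ℕ∞) F) (v η : En n) :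
    (fun ξ => dv (v, (0 : En n)) F (ξ, η)) = dv v (fun ξ => F (ξ, η)) := by
  ext ξ
  unfold dv
  have h1 : HasFDerivAt F (fderiv ℝ F (ξ, η)) (ξ, η) :=
    (hF.differentiable (by simp)).differentiableAt.hasFDerivAt
  have h2 : HasFDerivAt (fun ξ : En n => (ξ, η)) (ContinuousLinearMap.inl ℝ (En n) (En n)) ξ :=
    hasFDerivAt_prodMk_left ξ η
  have h3 := (h1.comp ξ h2).fderiv
  simp only [Function.comp_def] at h3
  rw [h3]; simp

theorem dv_slice_right {n : ℕ} {F : En n × En n → ℂ} (hF : ContDiff ℝ (⊤ : ℕ∞) F) (v ξ : En n) :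
    (fun η => dv ((0 : En n), v) F (ξ, η)) = dv v (fun η => F (ξ, η)) := by
  ext η
  unfold dv
  have h1 : HasFDerivAt F (fderiv ℝ F (ξ, η)) (ξ, η) :=
    (hF.differentiable (by simp)).differentiableAt.hasFDerivAt
  have h2 : HasFDerivAt (fun η : En n => (ξ, η)) (ContinuousLinearMap.inr ℝ (En n) (En n)) η :=
    hasFDerivAt_prodMk_right ξ η
  have h3 := (h1.comp η h2).fderiv
  simp only [Function.comp_def] at h3
  rw [h3]; simp

theorem DopL_slice_left {n : ℕ} {F : En n × En n → ℂ} (hF : ContDiff ℝ (⊤ : ℕ∞) F) (l : ℝ)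
    (L : List (En n)) (η : En n) :
    (fun ξ => DopL l (L.map fun v => (v, (0 : En n))) F (ξ, η)) = DopL l L (fun ξ => F (ξ, η)) := by
  induction L with
  | nil => rfl
  | cons v L ih =>
    rw [List.map_cons, DopL_cons, DopL_cons, ← ih]
    have hG := DopL_contDiff (l := l) (L := L.map fun v => (v, (0 : En n))) hF
    have h1 := dv_slice_left hG v η
    have h2 := dv_slice_left (dv_contDiff (v := (v, (0 : En n))) hG) v η
    rw [h1] at h2
    ext ξ
    simp only [Dop]
    rw [← h2]

theorem DopL_slice_right {n : ℕ} {F : En n × En n → ℂ} (hF : ContDiff ℝ (⊤ : ℕ∞) F) (l : ℝ)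
    (L : List (En n)) (ξ : En n) :
    (fun η => DopL l (L.map fun v => ((0 : En n), v)) F (ξ, η)) = DopL l L (fun η => F (ξ, η)) := by
  induction L with
  | nil => rfl
  | cons v L ih =>
    rw [List.map_cons, DopL_cons, DopL_cons, ← ih]
    have hG := DopL_contDiff (l := l) (L := L.map fun v => ((0 : En n), v)) hF
    have h1 := dv_slice_right hG v ξ
    have h2 := dv_slice_right (dv_contDiff (v := ((0 : En n), v)) hG) v ξ
    rw [h1] at h2
    ext η
    simp only [Dop]
    rw [← h2]

theorem ft_dv {n : ℕ} {G : En n → ℂ} (hG : ContDiff ℝ (⊤ : ℕ∞) G) (hc : HasCompactSupport G)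
    (v z : En n) : ft (dv v G) z = (Complex.I * Complex.ofReal ⟪v, z⟫) * ft G z := by
  unfold ft dv
  have hd : ∀ y : En n, HasFDerivAt (fun y : En n => Complex.exp (-(Complex.I * Complex.ofReal ⟪y, z⟫)))
      (Complex.exp (-(Complex.I * Complex.ofReal ⟪y, z⟫)) •
        (-(Complex.I • (Complex.ofRealCLM.comp ((innerSL ℝ).flip z))))) y := by
    intro y
    refine HasFDerivAt.cexp ?_
    refine HasFDerivAt.neg ?_
    have h0 : HasFDerivAt (fun y : En n => Complex.ofReal ⟪y, z⟫)
      (Complex.ofRealCLM.comp ((innerSL ℝ).flip z)) y :=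
      (Complex.ofRealCLM.comp ((innerSL ℝ).flip z)).hasFDerivAt
    simpa using h0.const_mul Complex.I
  have hcont : Continuous (fun y : En n => Complex.exp (-(Complex.I * Complex.ofReal ⟪y, z⟫))) := by
    fun_prop
  have hfd : ∀ y, fderiv ℝ (fun y : En n => Complex.exp (-(Complex.I * Complex.ofReal ⟪y, z⟫))) y v
      = -(Complex.I * Complex.ofReal ⟪v, z⟫) * Complex.exp (-(Complex.I * Complex.ofReal ⟪y, z⟫)) := by
    intro y
    rw [(hd y).fderiv]
    have e : (innerSL ℝ).flip z v = ⟪v, z⟫ := rfl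
    simp only [ContinuousLinearMap.smul_apply, ContinuousLinearMap.neg_apply, ContinuousLinearMap.comp_apply, e,
      Complex.ofRealCLM_apply, smul_eq_mul]
    ring
  rw [integral_mul_fderiv_eq_neg_fderiv_mul_of_integrable]
  · simp_rw [hfd]
    rw [← integral_neg, ← integral_const_mul]
    congr 1; ext y; ring
  · simp_rw [hfd]
    exact ((continuous_const.mul hcont).mul hG.continuous).integrable_of_hasCompactSupport
      hc.mul_left
  · exact (hcont.mul (dv_contDiff (v := v) hG).continuous).integrable_of_hasCompactSupport
      (dv_hcs hc).mul_left
  · exact (hcont.mul hG.continuous).integrable_of_hasCompactSupport hc.mul_left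
  · exact fun y _ => (hd y).differentiableAt
  · exact fun y _ => (hG.differentiable (by simp)).differentiableAt

theorem ft_Dop {n : ℕ} {G : En n → ℂ} (hG : ContDiff ℝ (⊤ : ℕ∞) G) (hc : HasCompactSupport G)
    (l : ℝ) (v z : En n) :
    ft (Dop l v G) z = ((1 + l ^ 2 * ⟪v, z⟫ ^ 2 : ℝ) : ℂ) * ft G z := by
  have h1 := ft_dv (dv_contDiff (v := v) hG) (dv_hcs hc) v z
  rw [ft_dv hG hc] at h1
  have hcont : Continuous (fun y : En n => Complex.exp (-(Complex.I * Complex.ofReal ⟪y, z⟫))) := by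
    fun_prop
  have h2 : ft (Dop l v G) z = ft G z - ((l ^ 2 : ℝ) : ℂ) * ft (dv v (dv v G)) z := by
    unfold ft
    rw [← integral_const_mul, ← integral_sub]
    · congr 1; ext y; unfold Dop; ring
    · exact (hcont.mul hG.continuous).integrable_of_hasCompactSupport hc.mul_left
    · refine Integrable.const_mul ?_ _
      exact (hcont.mul (dv_contDiff (dv_contDiff hG)).continuous).integrable_of_hasCompactSupport
        (dv_hcs (dv_hcs hc)).mul_left
  rw [h2, h1]
  push_cast
  linear_combination -(l:ℂ)^2 * (⟪v, z⟫:ℂ)^2 * ft G z * Complex.I_sq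

/-- The polynomial weight. -/
def wt {n : ℕ} (l : ℝ) (z : En n) : ℝ := ∏ i, (1 + l ^ 2 * z i ^ 2)

/-- The list of coordinate directions. -/
def bas (n : ℕ) : List (En n) := (List.finRange n).map fun i => EuclideanSpace.single i 1

theorem ft_DopL {n : ℕ} {G : En n → ℂ} (hG : ContDiff ℝ (⊤ : ℕ∞) G) (hc : HasCompactSupport G)
    (l : ℝ) (z : En n) : ft (DopL l (bas n) G) z = ((wt l z : ℝ) : ℂ) * ft G z := by
  have h : ∀ L : List (En n), ft (DopL l L G) z =
      (((L.map fun v => 1 + l ^ 2 * ⟪v, z⟫ ^ 2).prod : ℝ) : ℂ) * ft G z := by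
    intro L
    induction L with
    | nil => simp [DopL_nil]
    | cons v L ih =>
      rw [DopL_cons, ft_Dop (DopL_contDiff hG) (DopL_hcs hc), ih, List.map_cons, List.prod_cons]
      push_cast; ring
  rw [h, bas, List.map_map, wt, ← List.ofFn_eq_map, List.prod_ofFn]
  simp [EuclideanSpace.inner_single_left]

theorem one_le_wt {n : ℕ} (l : ℝ) (z : En n) : 1 ≤ wt l z := by
  unfold wt
  have := Finset.prod_le_prod (s := Finset.univ) (f := fun _ : Fin n => (1:ℝ))
    (g := fun i => 1 + l ^ 2 * z i ^ 2) (fun _ _ => zero_le_one)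
    (fun i _ => by have : 0 ≤ l ^ 2 * z i ^ 2 := by positivity
                   linarith)
  simpa using this

theorem wt_cont {n : ℕ} (l : ℝ) : Continuous (wt (n := n) l) := by
  unfold wt
  fun_prop

theorem wt_inv_lintegral {n : ℕ} {l : ℝ} (hl : 0 < l) :
    ∫⁻ z : En n, ENNReal.ofReal (wt l z)⁻¹ = ENNReal.ofReal ((π / l) ^ n) := by
  have h1 : Integrable (fun x : ℝ => (1 + l ^ 2 * x ^ 2)⁻¹) := by
    have := integrable_inv_one_add_sq.comp_mul_left' hl.ne'
    simpa [mul_pow] using this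
  have h2 : ∫ x : ℝ, (1 + l ^ 2 * x ^ 2)⁻¹ = π / l := by
    have := Measure.integral_comp_mul_left (fun x : ℝ => (1 + x ^ 2)⁻¹) l
    rw [integral_univ_inv_one_add_sq] at this
    simp only [mul_pow] at this
    rw [this, abs_of_pos (by positivity)]; simp [div_eq_inv_mul]
  have h3 : Integrable (fun x : Fin n → ℝ => ∏ i, (1 + l ^ 2 * x i ^ 2)⁻¹) :=
    Integrable.fintype_prod (f := fun _ : Fin n => fun x : ℝ => (1 + l ^ 2 * x ^ 2)⁻¹) (fun _ => h1)
  have h4 := integral_fintype_prod_volume_eq_pow (ι := Fin n) (fun x : ℝ => (1 + l ^ 2 * x ^ 2)⁻¹)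
  rw [h2, Fintype.card_fin] at h4
  have h5 : ∫⁻ z : En n, ENNReal.ofReal (wt l z)⁻¹ =
      ∫⁻ x : Fin n → ℝ, ENNReal.ofReal (∏ i, (1 + l ^ 2 * x i ^ 2)⁻¹) := by
    rw [← (PiLp.volume_preserving_ofLp (Fin n)).lintegral_comp (by fun_prop)]
    simp [wt, Finset.prod_inv_distrib]
  rw [h5, ← ofReal_integral_eq_lintegral_ofReal h3, h4]
  exact Filter.Eventually.of_forall fun x => Finset.prod_nonneg fun i _ => by positivity

/-- The finite measure with density `1 / wt`. -/
def wnu (n : ℕ) (l : ℝ) : Measure (En n) := volume.withDensity fun z => ENNReal.ofReal (wt l z)⁻¹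

theorem wnu_univ {n : ℕ} {l : ℝ} (hl : 0 < l) :
    wnu n l Set.univ = ENNReal.ofReal ((π / l) ^ n) := by
  rw [wnu, withDensity_apply _ MeasurableSet.univ, Measure.restrict_univ, wt_inv_lintegral hl]

/-- The averaging operator. -/
def Phi {n : ℕ} (l s : ℝ) (f : En n → ℂ) (x : En n) : ℝ≥0∞ :=
  (∫⁻ z, ‖f (x + z)‖ₑ ^ s ∂(wnu n l)) ^ (1 / s)

theorem Phi_ge {n : ℕ} {l s : ℝ} (hs : 1 ≤ s) {f : En n → ℂ} (hf : Continuous f) (x : En n) :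
    (∫⁻ z, (ENNReal.ofReal (wt l z)⁻¹ * ‖f (x + z)‖ₑ) ^ s) ^ (1 / s) ≤ Phi l s f x := by
  unfold Phi wnu
  have hm : Measurable fun z => ENNReal.ofReal (wt (n := n) l z)⁻¹ := by
    have := (wt_cont (n := n) l).measurable
    fun_prop
  have hf' := hf.measurable
  rw [lintegral_withDensity_eq_lintegral_mul _ hm (by fun_prop)]
  refine ENNReal.rpow_le_rpow (lintegral_mono fun z => ?_) (by positivity)
  rw [ENNReal.mul_rpow_of_nonneg _ _ (by linarith)]
  simp only [Pi.mul_apply]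
  gcongr
  have h1 : (wt l z)⁻¹ ≤ 1 := inv_le_one_of_one_le₀ (one_le_wt l z)
  have h2 : ENNReal.ofReal (wt l z)⁻¹ ≤ 1 := by simpa using h1
  calc _ ≤ (ENNReal.ofReal (wt l z)⁻¹) ^ (1:ℝ) := ENNReal.rpow_le_rpow_of_exponent_ge h2 hs
    _ = _ := by simp

theorem lin_ident {n : ℕ} {G f : En n → ℂ} (hG : Integrable G) (hf : Integrable f)
    (x : En n) : ∫ ξ, G ξ * Complex.exp (Complex.I * Complex.ofReal ⟪x, ξ⟫) * ft f ξ =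
      ∫ z, f (x + z) * ft G z := by
  have h1 : ∀ ξ, G ξ * Complex.exp (Complex.I * Complex.ofReal ⟪x, ξ⟫) * ft f ξ =
      ∫ z, G ξ * (f (x + z) * Complex.exp (-(Complex.I * Complex.ofReal ⟪ξ, z⟫))) := by
    intro ξ
    unfold ft
    rw [← integral_add_left_eq_self _ x, ← integral_const_mul]
    congr 1; ext z
    rw [inner_add_left, real_inner_comm z ξ]
    have : Complex.exp (-(Complex.I * ((⟪x, ξ⟫ + ⟪z, ξ⟫ : ℝ) : ℂ))) =
      Complex.exp (-(Complex.I * (⟪x, ξ⟫ : ℂ))) * Complex.exp (-(Complex.I * (⟪z, ξ⟫ : ℂ))) := by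
      rw [← Complex.exp_add]; congr 1; push_cast; ring
    rw [this]
    have h2 : Complex.exp (Complex.I * (⟪x, ξ⟫ : ℂ)) * Complex.exp (-(Complex.I * (⟪x, ξ⟫ : ℂ))) = 1 := by
      rw [← Complex.exp_add]; simp
    linear_combination G ξ * f (x + z) * Complex.exp (-(Complex.I * (⟪z, ξ⟫ : ℂ))) * h2
  simp_rw [h1]
  rw [integral_integral_swap]
  · congr 1; ext z
    unfold ft
    rw [← integral_const_mul]
    congr 1; ext ξ; ring
  · have h3 : Integrable (fun q : En n × En n => G q.1 * f (x + q.2)) (volume.prod volume) :=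
      hG.mul_prod (hf.comp_add_left x)
    have hcont : Continuous (fun q : En n × En n =>
      Complex.exp (-(Complex.I * Complex.ofReal ⟪q.1, q.2⟫))) := by fun_prop
    have := h3.mul_bdd (c := 1) hcont.aestronglyMeasurable
      (Filter.Eventually.of_forall fun q => by
        rw [Complex.norm_exp]; simp)
    refine this.congr (Filter.Eventually.of_forall fun q => ?_)
    simp only [Function.uncurry]; ring

theorem lin_est {n : ℕ} {s t : ℝ} (hs : 1 ≤ s) (hs2 : s < 2) (hst : s ≤ t)
    (hst' : s = 1 ∨ s < t) :
    ∃ C : ℝ, 0 < C ∧ ∀ (G DG f : En n → ℂ) (V l : ℝ) (x : En n), ContDiff ℝ (⊤ : ℕ∞) DG →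
      HasCompactSupport DG → Integrable G → 0 < V → volume (Function.support DG) ≤ ENNReal.ofReal V →
      (∀ z, ft DG z = ((wt l z : ℝ) : ℂ) * ft G z) →
      Integrable f → Continuous f →
      ‖∫ ξ, G ξ * Complex.exp (Complex.I * Complex.ofReal ⟪x, ξ⟫) * ft f ξ‖ₑ ≤
        ENNReal.ofReal (C * V ^ (1 / s - 1 / t)) *
        (∫⁻ y, ‖DG y‖ₑ ^ t) ^ (1 / t) * Phi l s f x := by
  obtain ⟨C, hC, h⟩ := hy_pair (n := n) hs hs2 hst hst'
  refine ⟨C, hC, ?_⟩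
  intro G DG f V l x hD hDc hG hV hDV hft hf hfc
  have hm : Measurable fun z => ENNReal.ofReal (wt (n := n) l z)⁻¹ := by
    have := (wt_cont (n := n) l).measurable
    fun_prop
  have hf' := hfc.measurable
  rw [lin_ident hG hf]
  refine (enorm_integral_le_lintegral_enorm _).trans ?_
  have h1 := h DG V (fun z => ENNReal.ofReal (wt l z)⁻¹ * ‖f (x + z)‖ₑ) hD hDc hV hDV (by fun_prop)
  refine le_trans (le_of_eq ?_) (h1.trans (mul_le_mul_right (Phi_ge hs hfc x) _))
  congr 1; ext z
  rw [hft z]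
  have hw : 0 < wt l z := lt_of_lt_of_le one_pos (one_le_wt l z)
  have e : ‖((wt l z : ℝ) : ℂ)‖ₑ = ENNReal.ofReal (wt l z) := by
    rw [← ofReal_norm, Complex.norm_real, Real.norm_of_nonneg hw.le]
  have e2 : ENNReal.ofReal (wt l z) * ENNReal.ofReal (wt l z)⁻¹ = 1 := by
    rw [← ENNReal.ofReal_mul hw.le, mul_inv_cancel₀ hw.ne']; simp
  rw [enorm_mul, enorm_mul, e]
  calc _ = (ENNReal.ofReal (wt l z) * ENNReal.ofReal (wt l z)⁻¹) * (‖f (x + z)‖ₑ * ‖ft G z‖ₑ) := by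
        rw [e2, one_mul]
    _ = _ := by ring

/-! ### The bilinear pointwise estimate -/

/-- Partial integral of a function of two variables. -/
def cint {n : ℕ} (F : En n × En n → ℂ) (h : En n → ℂ) (ξ : En n) : ℂ := ∫ η, F (ξ, η) * h η

theorem slice_hcs_left {n : ℕ} {F : En n × En n → ℂ} {R : ℝ} (hR : ∀ w, R < ‖w‖ → F w = 0)
    (η : En n) : HasCompactSupport (fun ξ => F (ξ, η)) := by
  refine HasCompactSupport.of_support_subset_isCompact (isCompact_closedBall (0 : En n) R) ?_
  intro ξ hξ
  by_contra h
  refine hξ (hR _ ?_)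
  simp only [Metric.mem_closedBall, dist_zero_right, not_le] at h
  exact h.trans_le (norm_fst_le (ξ, η))

theorem slice_hcs_right {n : ℕ} {F : En n × En n → ℂ} {R : ℝ} (hR : ∀ w, R < ‖w‖ → F w = 0)
    (ξ : En n) : HasCompactSupport (fun η => F (ξ, η)) := by
  refine HasCompactSupport.of_support_subset_isCompact (isCompact_closedBall (0 : En n) R) ?_
  intro η hη
  by_contra h
  refine hη (hR _ ?_)
  simp only [Metric.mem_closedBall, dist_zero_right, not_le] at h
  exact h.trans_le (norm_snd_le (ξ, η))

theorem cint_zero {n : ℕ} {F : En n × En n → ℂ} {R : ℝ} (hR : ∀ w, R < ‖w‖ → F w = 0)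
    (h : En n → ℂ) {ξ : En n} (hξ : R < ‖ξ‖) : cint F h ξ = 0 := by
  unfold cint
  have : ∀ η, F (ξ, η) * h η = 0 := fun η => by
    rw [hR _ (hξ.trans_le (norm_fst_le (ξ, η))), zero_mul]
  simp [this]

theorem cint_hcs {n : ℕ} {F : En n × En n → ℂ} {R : ℝ} (hR : ∀ w, R < ‖w‖ → F w = 0)
    (h : En n → ℂ) : HasCompactSupport (cint F h) := by
  refine HasCompactSupport.of_support_subset_isCompact (isCompact_closedBall (0 : En n) R) ?_
  intro ξ hξ
  by_contra h'
  simp only [Metric.mem_closedBall, dist_zero_right, not_le] at h'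
  exact hξ (cint_zero hR h h')

theorem cint_contDiff {n : ℕ} {F : En n × En n → ℂ} {R : ℝ} (hF : ContDiff ℝ (⊤ : ℕ∞) F)
    (hR : ∀ w, R < ‖w‖ → F w = 0) {h : En n → ℂ} (hh : Continuous h) :
    ContDiff ℝ (⊤ : ℕ∞) (cint F h) := by
  have key := contDiffOn_convolution_right_with_param_comp (𝕜 := ℝ) (n := (⊤ : ℕ∞)) (P := En n)
    (μ := (volume : Measure (En n))) (ContinuousLinearMap.mul ℝ ℂ) (s := Set.univ) (v := fun _ => (0 : En n))
    contDiffOn_const (f := h) (g := fun ξ y => F (ξ, -y)) (k := Metric.closedBall 0 R) isOpen_univ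
    (isCompact_closedBall _ _) (by
      intro ξ y _ hy
      simp only [Metric.mem_closedBall, dist_zero_right, not_le] at hy
      refine hR _ (hy.trans_le ?_)
      have := norm_snd_le (ξ, -y)
      simpa using this) hh.locallyIntegrable (by
      have : ContDiff ℝ (⊤ : ℕ∞) (fun q : En n × En n => F (q.1, -q.2)) := hF.comp (by fun_prop)
      exact this.contDiffOn)
  rw [contDiffOn_univ] at key
  convert key using 2
  unfold cint convolution
  congr 1; ext y
  simp [mul_comm]

theorem ft_cint {n : ℕ} {F : En n × En n → ℂ} {R : ℝ} (hF : ContDiff ℝ (⊤ : ℕ∞) F)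
    (hR : ∀ w, R < ‖w‖ → F w = 0) {h : En n → ℂ} (hh : Continuous h) (z : En n) :
    ft (cint F h) z = ∫ η, h η * ft (fun ξ => F (ξ, η)) z := by
  have hFc : HasCompactSupport F := by
    refine HasCompactSupport.of_support_subset_isCompact
      (isCompact_closedBall (0 : En n × En n) R) ?_
    intro w hw
    by_contra h'
    simp only [Metric.mem_closedBall, dist_zero_right, not_le] at h'
    exact hw (hR w h')
  unfold ft cint
  simp_rw [← integral_const_mul]
  rw [integral_integral_swap]
  · congr 1; ext η; congr 1; ext ξ; ring
  · have : Continuous fun q : En n × En n =>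
        F q * (Complex.exp (-(Complex.I * Complex.ofReal ⟪q.1, z⟫)) * h q.2) := by
      have := hF.continuous
      fun_prop
    refine (this.integrable_of_hasCompactSupport (μ := volume.prod volume) hFc.mul_right).congr
      (Filter.Eventually.of_forall fun q => ?_)
    simp only [Function.uncurry]; ring

theorem ft_cint_D {n : ℕ} {F : En n × En n → ℂ} {R : ℝ} (hF : ContDiff ℝ (⊤ : ℕ∞) F)
    (hR : ∀ w, R < ‖w‖ → F w = 0)
    {l : ℝ} (hR' : ∀ w, R < ‖w‖ → DopL l ((bas n).map fun v => (v, (0 : En n))) F w = 0)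
    {h : En n → ℂ} (hh : Continuous h) (z : En n) :
    ft (cint (DopL l ((bas n).map fun v => (v, (0 : En n))) F) h) z =
      ((wt l z : ℝ) : ℂ) * ft (cint F h) z := by
  rw [ft_cint hF hR hh, ft_cint (DopL_contDiff hF) hR' hh, ← integral_const_mul]
  congr 1; ext η
  have hs : ContDiff ℝ (⊤ : ℕ∞) (fun ξ => F (ξ, η)) := hF.comp (by fun_prop)
  rw [DopL_slice_left hF, ft_DopL hs (slice_hcs_left hR η)]
  ring

theorem DopL_zero {E : Type*} [NormedAddCommGroup E] [NormedSpace ℝ E] {F : E → ℂ} {R : ℝ}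
    (hR : ∀ w, R < ‖w‖ → F w = 0) (l : ℝ) (L : List E) (w : E) (hw : R < ‖w‖) :
    DopL l L F w = 0 := by
  have h1 : tsupport F ⊆ Metric.closedBall 0 R := by
    refine closure_minimal ?_ Metric.isClosed_closedBall
    intro y hy
    by_contra h'
    simp only [Metric.mem_closedBall, dist_zero_right, not_le] at h'
    exact hy (hR y h')
  apply image_eq_zero_of_notMem_tsupport
  intro h2
  have := h1 (DopL_tsupport l L F h2)
  simp only [Metric.mem_closedBall, dist_zero_right] at this
  linarith

/-- The full differential operator. -/
def DD {n : ℕ} (l : ℝ) (F : En n × En n → ℂ) : En n × En n → ℂ :=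
  DopL l ((bas n).map fun v => ((0 : En n), v)) (DopL l ((bas n).map fun v => (v, (0 : En n))) F)

theorem supp_vol {n : ℕ} {G : En n → ℂ} {R : ℝ} (hR0 : 0 < R) (hR : ∀ w, R < ‖w‖ → G w = 0) :
    volume (Function.support G) ≤
      ENNReal.ofReal (R ^ n * (volume (Metric.ball (0 : En n) 1)).toReal) := by
  have h1 : Function.support G ⊆ Metric.closedBall 0 R := by
    intro y hy
    by_contra h'
    simp only [Metric.mem_closedBall, dist_zero_right, not_le] at h'
    exact hy (hR y h')
  refine (measure_mono h1).trans ?_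
  rw [Measure.addHaar_closedBall _ _ hR0.le, ENNReal.ofReal_mul (by positivity),
    ENNReal.ofReal_toReal measure_ball_lt_top.ne]
  simp

theorem bil_est {n : ℕ} {s₁ s₂ t : ℝ} (hs : 1 ≤ s₁) (hs2 : s₁ < 2) (hst : s₁ ≤ t)
    (hst' : s₁ = 1 ∨ s₁ < t) (ks : 1 ≤ s₂) (ks2 : s₂ < 2) (kst : s₂ ≤ t)
    (kst' : s₂ = 1 ∨ s₂ < t) :
    ∃ C : ℝ, 0 < C ∧ ∀ (F : En n × En n → ℂ) (f g : En n → ℂ) (R l : ℝ) (x : En n),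
      ContDiff ℝ (⊤ : ℕ∞) F → 0 < R → (∀ w, R < ‖w‖ → F w = 0) →
      Integrable f → Continuous f → Integrable g → Continuous g →
      ‖∫ w : En n × En n, F w * Complex.exp (Complex.I * Complex.ofReal (⟪x, w.1⟫ + ⟪x, w.2⟫)) *
          ft f w.1 * ft g w.2‖ₑ ≤
        ENNReal.ofReal (C * ((R ^ n) ^ (1 / s₁ - 1 / t) * (R ^ n) ^ (1 / s₂ - 1 / t))) *
        (∫⁻ w, ‖DD l F w‖ₑ ^ t) ^ (1 / t) * Phi l s₁ f x * Phi l s₂ g x := by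
  obtain ⟨C₁, hC₁, h₁⟩ := lin_est (n := n) hs hs2 hst hst'
  obtain ⟨C₂, hC₂, h₂⟩ := lin_est (n := n) ks ks2 kst kst'
  have ht0 : 0 < t := by linarith
  set B := (volume (Metric.ball (0 : En n) 1)).toReal with hB
  have hB0 : 0 < B := ENNReal.toReal_pos (Metric.measure_ball_pos _ _ one_pos).ne'
    measure_ball_lt_top.ne
  refine ⟨C₁ * C₂ * (B ^ (1 / s₁ - 1 / t) * B ^ (1 / s₂ - 1 / t)), by positivity, ?_⟩
  intro F f g R l x hF hR0 hR hf hfc hg hgc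
  set D1 := DopL l ((bas n).map fun v => (v, (0 : En n))) F with hD1
  have hD1s : ContDiff ℝ (⊤ : ℕ∞) D1 := DopL_contDiff hF
  have hD1R : ∀ w, R < ‖w‖ → D1 w = 0 := DopL_zero hR l _
  have hDDs : ContDiff ℝ (⊤ : ℕ∞) (DD l F) := DopL_contDiff hD1s
  have hDDR : ∀ w, R < ‖w‖ → DD l F w = 0 := DopL_zero hD1R l _
  set h : En n → ℂ := fun η => Complex.exp (Complex.I * Complex.ofReal ⟪x, η⟫) * ft g η with hh
  have hgft := ft_continuous hg
  have hfft := ft_continuous hf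
  have hhc : Continuous h := by fun_prop
  have hFc : HasCompactSupport F := by
    refine HasCompactSupport.of_support_subset_isCompact
      (isCompact_closedBall (0 : En n × En n) R) ?_
    intro w hw
    by_contra h'
    simp only [Metric.mem_closedBall, dist_zero_right, not_le] at h'
    exact hw (hR w h')
  have hV : 0 < R ^ n * B := by positivity
  have e1 : ∫ w : En n × En n, F w * Complex.exp (Complex.I * Complex.ofReal (⟪x, w.1⟫ + ⟪x, w.2⟫)) *
          ft f w.1 * ft g w.2 =
      ∫ ξ, cint F h ξ * Complex.exp (Complex.I * Complex.ofReal ⟪x, ξ⟫) * ft f ξ := by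
    have hi : Integrable (fun w : En n × En n =>
        F w * Complex.exp (Complex.I * Complex.ofReal (⟪x, w.1⟫ + ⟪x, w.2⟫)) *
          ft f w.1 * ft g w.2) (volume.prod volume) := by
      refine Continuous.integrable_of_hasCompactSupport ?_
        ((hFc.mul_right.mul_right).mul_right)
      have := hF.continuous
      fun_prop
    rw [Measure.volume_eq_prod, integral_prod _ hi]
    congr 1; ext ξ
    unfold cint
    rw [mul_assoc, ← integral_mul_const]
    congr 1; ext η
    simp only [hh]
    have : Complex.exp (Complex.I * ((⟪x, ξ⟫ + ⟪x, η⟫ : ℝ) : ℂ)) =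
      Complex.exp (Complex.I * (⟪x, ξ⟫ : ℂ)) * Complex.exp (Complex.I * (⟪x, η⟫ : ℂ)) := by
      rw [← Complex.exp_add]; congr 1; push_cast; ring
    rw [this]; ring
  rw [e1]
  have a1 := h₁ (cint F h) (cint D1 h) f (R ^ n * B) l x (cint_contDiff hD1s hD1R hhc)
    (cint_hcs hD1R h) ((cint_contDiff hF hR hhc).continuous.integrable_of_hasCompactSupport
      (cint_hcs hR h)) hV (supp_vol hR0 fun ξ hξ => cint_zero hD1R h hξ)
    (ft_cint_D hF hR hD1R hhc) hf hfc
  have a2 : ∀ ξ, ‖cint D1 h ξ‖ₑ ≤ ENNReal.ofReal (C₂ * (R ^ n * B) ^ (1 / s₂ - 1 / t)) *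
        (∫⁻ η, ‖DD l F (ξ, η)‖ₑ ^ t) ^ (1 / t) * Phi l s₂ g x := by
    intro ξ
    have hGs : ContDiff ℝ (⊤ : ℕ∞) (fun η => D1 (ξ, η)) := hD1s.comp (by fun_prop)
    have hDGs : ContDiff ℝ (⊤ : ℕ∞) (fun η => DD l F (ξ, η)) := hDDs.comp (by fun_prop)
    have := h₂ (fun η => D1 (ξ, η)) (fun η => DD l F (ξ, η)) g (R ^ n * B) l x hDGs
      (slice_hcs_right hDDR ξ)
      (hGs.continuous.integrable_of_hasCompactSupport (slice_hcs_right hD1R ξ)) hV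
      (supp_vol hR0 fun η hη => hDDR _ (hη.trans_le (norm_snd_le (ξ, η))))
      (by
        intro z
        have := DopL_slice_right hD1s l (bas n) ξ
        rw [show (fun η => DD l F (ξ, η)) = _ from this]
        exact ft_DopL hGs (slice_hcs_right hD1R ξ) l z) hg hgc
    refine le_trans (le_of_eq ?_) this
    congr 1
    unfold cint
    congr 1; ext η; simp only [hh]; ring
  have hmeas : Measurable fun w => ‖DD l F w‖ₑ ^ t := by
    have := hDDs.continuous.measurable
    fun_prop
  have a3 : (∫⁻ ξ, ‖cint D1 h ξ‖ₑ ^ t) ^ (1 / t) ≤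
      ENNReal.ofReal (C₂ * (R ^ n * B) ^ (1 / s₂ - 1 / t)) * Phi l s₂ g x *
        (∫⁻ w, ‖DD l F w‖ₑ ^ t) ^ (1 / t) := by
    set K := ENNReal.ofReal (C₂ * (R ^ n * B) ^ (1 / s₂ - 1 / t)) * Phi l s₂ g x with hK
    have b1 : ∫⁻ ξ, ‖cint D1 h ξ‖ₑ ^ t ≤ ∫⁻ ξ, K ^ t * ∫⁻ η, ‖DD l F (ξ, η)‖ₑ ^ t := by
      refine lintegral_mono fun ξ => ?_
      refine (ENNReal.rpow_le_rpow (a2 ξ) ht0.le).trans (le_of_eq ?_)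
      rw [mul_right_comm, ← hK, ENNReal.mul_rpow_of_nonneg _ _ ht0.le, ← ENNReal.rpow_mul,
        one_div_mul_cancel ht0.ne', ENNReal.rpow_one]
    rw [lintegral_const_mul _ hmeas.lintegral_prod_right', ← lintegral_prod _ hmeas.aemeasurable,
      ← Measure.volume_eq_prod] at b1
    refine (ENNReal.rpow_le_rpow b1 (by positivity)).trans (le_of_eq ?_)
    rw [ENNReal.mul_rpow_of_nonneg _ _ (by positivity), ← ENNReal.rpow_mul,
      mul_one_div_cancel ht0.ne', ENNReal.rpow_one]
  refine a1.trans ?_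
  calc _ ≤ ENNReal.ofReal (C₁ * (R ^ n * B) ^ (1 / s₁ - 1 / t)) *
      (ENNReal.ofReal (C₂ * (R ^ n * B) ^ (1 / s₂ - 1 / t)) * Phi l s₂ g x *
        (∫⁻ w, ‖DD l F w‖ₑ ^ t) ^ (1 / t)) * Phi l s₁ f x := by gcongr
    _ = (ENNReal.ofReal (C₁ * (R ^ n * B) ^ (1 / s₁ - 1 / t)) *
      ENNReal.ofReal (C₂ * (R ^ n * B) ^ (1 / s₂ - 1 / t))) * 
        (∫⁻ w, ‖DD l F w‖ₑ ^ t) ^ (1 / t) * Phi l s₁ f x * Phi l s₂ g x := by ring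
    _ = _ := by
      rw [← ENNReal.ofReal_mul (by positivity), Real.mul_rpow (by positivity) hB0.le,
        Real.mul_rpow (by positivity) hB0.le]
      congr 4; ring

/-! ### Pointwise derivative bounds -/

section derivs
variable {E : Type*} [NormedAddCommGroup E] [NormedSpace ℝ E]

theorem coe_le_top' (i : ℕ) : ((i : ℕ) : WithTop ℕ∞) ≤ ((⊤ : ℕ∞) : WithTop ℕ∞) := by
  exact_mod_cast le_top

theorem iFD_dv_le {G : E → ℂ} (hG : ContDiff ℝ (⊤ : ℕ∞) G) {v : E} (hv : ‖v‖ ≤ 1) (i : ℕ) (w : E) :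
    ‖iteratedFDeriv ℝ i (dv v G) w‖ ≤ ‖iteratedFDeriv ℝ (i + 1) G w‖ := by
  have h1 : ContDiff ℝ (⊤ : ℕ∞) (fderiv ℝ G) := hG.fderiv_right (by simp)
  have h2 := norm_iteratedFDeriv_clm_apply_const (𝕜 := ℝ) (c := v) (x := w) (n := i) h1.contDiffAt
    (coe_le_top' i)
  rw [norm_iteratedFDeriv_fderiv] at h2
  exact h2.trans (mul_le_of_le_one_left (norm_nonneg _) hv)

theorem iFD_Dop_le {G : E → ℂ} (hG : ContDiff ℝ (⊤ : ℕ∞) G) {v : E} (hv : ‖v‖ ≤ 1) {l A : ℝ}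
    (hl : 0 < l) {K : ℕ} {w : E} (h : ∀ i ≤ K + 2, l ^ i * ‖iteratedFDeriv ℝ i G w‖ ≤ A) :
    ∀ i ≤ K, l ^ i * ‖iteratedFDeriv ℝ i (Dop l v G) w‖ ≤ 2 * A := by
  intro i hi
  have hdd := dv_contDiff (v := v) (dv_contDiff (v := v) hG)
  have e1 : Dop l v G = G - (ContinuousLinearMap.mul ℝ ℂ ((l ^ 2 : ℝ) : ℂ)) ∘ dv v (dv v G) := by
    ext y; simp [Dop]
  have h2 := (ContinuousLinearMap.mul ℝ ℂ ((l ^ 2 : ℝ) : ℂ)).norm_iteratedFDeriv_comp_left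
    (x := w) (n := i) hdd.contDiffAt (coe_le_top' i)
  have h3 : ‖ContinuousLinearMap.mul ℝ ℂ ((l ^ 2 : ℝ) : ℂ)‖ ≤ l ^ 2 := by
    refine (ContinuousLinearMap.opNorm_mul_apply_le ℝ ℂ _).trans (le_of_eq ?_)
    rw [Complex.norm_real, Real.norm_of_nonneg (by positivity)]
  have h4 := (iFD_dv_le (dv_contDiff (v := v) hG) hv i w).trans (iFD_dv_le hG hv (i + 1) w)
  have hs : ContDiff ℝ (⊤ : ℕ∞) ((ContinuousLinearMap.mul ℝ ℂ ((l ^ 2 : ℝ) : ℂ)) ∘ dv v (dv v G)) :=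
    (ContinuousLinearMap.contDiff _).comp hdd
  rw [e1, iteratedFDeriv_sub_apply (hG.contDiffAt.of_le (coe_le_top' i))
    (hs.contDiffAt.of_le (coe_le_top' i))]
  have h5 := h i (by omega)
  have h6 := h (i + 1 + 1) (by omega)
  have h7 : l ^ i * (l ^ 2 * ‖iteratedFDeriv ℝ (i + 1 + 1) G w‖) ≤ A := by
    refine le_trans (le_of_eq ?_) h6; ring
  calc _ ≤ l ^ i * (‖iteratedFDeriv ℝ i G w‖ + l ^ 2 * ‖iteratedFDeriv ℝ (i + 1 + 1) G w‖) := by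
        gcongr
        refine (norm_sub_le _ _).trans ?_
        gcongr
        refine h2.trans ?_
        gcongr
    _ ≤ _ := by rw [mul_add]; linarith

theorem iFD_DopL_le {l : ℝ} (hl : 0 < l) (L : List E) (hL : ∀ v ∈ L, ‖v‖ ≤ 1) {G : E → ℂ}
    (hG : ContDiff ℝ (⊤ : ℕ∞) G) {w : E} {A : ℝ} {K : ℕ}
    (h : ∀ i ≤ K + 2 * L.length, l ^ i * ‖iteratedFDeriv ℝ i G w‖ ≤ A) :
    ∀ i ≤ K, l ^ i * ‖iteratedFDeriv ℝ i (DopL l L G) w‖ ≤ 2 ^ L.length * A := by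
  induction L generalizing K with
  | nil => simpa [DopL_nil] using h
  | cons v L ih =>
    have h1 := ih (fun u hu => hL u (List.mem_cons_of_mem _ hu)) (K := K + 2) (by
      intro i hi; exact h i (by simp only [List.length_cons]; omega))
    have h2 := iFD_Dop_le (DopL_contDiff (l := l) (L := L) hG) (hL v List.mem_cons_self) hl h1
    intro i hi
    rw [DopL_cons, List.length_cons, pow_succ']
    exact (h2 i hi).trans (le_of_eq (by ring))

theorem iFD_mul_le {l : ℝ} (hl : 0 < l) {G ψ : E → ℂ} (hG : ContDiff ℝ (⊤ : ℕ∞) G)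
    (hψ : ContDiff ℝ (⊤ : ℕ∞) ψ) {w : E} {B : ℝ} {N : ℕ}
    (h : ∀ i ≤ N, l ^ i * ‖iteratedFDeriv ℝ i ψ w‖ ≤ B) :
    ∀ i ≤ N, l ^ i * ‖iteratedFDeriv ℝ i (fun y => G y * ψ y) w‖ ≤
      2 ^ N * B * ∑ j ∈ Finset.range (N + 1), l ^ j * ‖iteratedFDeriv ℝ j G w‖ := by
  intro i hi
  have hB : 0 ≤ B := le_trans (by positivity) (h 0 (by omega))
  set S := ∑ j ∈ Finset.range (N + 1), l ^ j * ‖iteratedFDeriv ℝ j G w‖ with hS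
  have hS0 : 0 ≤ S := by positivity
  have h1 := norm_iteratedFDeriv_mul_le hG hψ w (n := i) (coe_le_top' i)
  calc _ ≤ l ^ i * ∑ j ∈ Finset.range (i + 1),
      (i.choose j : ℝ) * ‖iteratedFDeriv ℝ j G w‖ * ‖iteratedFDeriv ℝ (i - j) ψ w‖ := by gcongr
    _ = ∑ j ∈ Finset.range (i + 1), (i.choose j : ℝ) * ((l ^ j * ‖iteratedFDeriv ℝ j G w‖) *
        (l ^ (i - j) * ‖iteratedFDeriv ℝ (i - j) ψ w‖)) := by
        rw [Finset.mul_sum]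
        refine Finset.sum_congr rfl fun j hj => ?_
        have : j ≤ i := by simpa [Nat.lt_succ_iff] using hj
        have e : l ^ i = l ^ j * l ^ (i - j) := by rw [← pow_add]; congr 1; omega
        rw [e]; ring
    _ ≤ ∑ j ∈ Finset.range (i + 1), (i.choose j : ℝ) * (S * B) := by
        refine Finset.sum_le_sum fun j hj => ?_
        have hj' : j ≤ i := by simpa [Nat.lt_succ_iff] using hj
        gcongr
        · exact Finset.single_le_sum (f := fun j => l ^ j * ‖iteratedFDeriv ℝ j G w‖)
            (fun _ _ => by positivity) (Finset.mem_range.mpr (by omega))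
        · exact h _ (by omega)
    _ = 2 ^ i * (S * B) := by
        rw [← Finset.sum_mul, ← Nat.cast_sum, Nat.sum_range_choose]; push_cast; ring
    _ ≤ 2 ^ N * (S * B) := by
        gcongr
        norm_num
    _ = _ := by ring

theorem iFD_succ_le {ι : Type*} [Fintype ι] (b : Module.Basis ι ℝ E) [FiniteDimensional ℝ E] :
    ∃ C : ℝ, 0 < C ∧ ∀ (G : E → ℂ), ContDiff ℝ (⊤ : ℕ∞) G → ∀ (j : ℕ) (w : E),
      ‖iteratedFDeriv ℝ (j + 1) G w‖ ≤ C * ∑ i, ‖iteratedFDeriv ℝ j (dv (b i) G) w‖ := by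
  let M : ι → (ℂ →L[ℝ] (E →L[ℝ] ℂ)) := fun i =>
    ContinuousLinearMap.smulRightL ℝ E ℂ (LinearMap.toContinuousLinearMap (b.coord i))
  refine ⟨1 + ∑ i, ‖M i‖, by positivity, ?_⟩
  intro G hG j w
  have e : fderiv ℝ G = fun y => ∑ i, ((M i) ∘ (dv (b i) G)) y := by
    ext y v
    conv_lhs => rw [← b.sum_repr v, map_sum]
    simp [M, dv]
  rw [← norm_iteratedFDeriv_fderiv, e, iteratedFDeriv_fun_sum_apply]
  · refine (norm_sum_le _ _).trans ?_
    rw [Finset.mul_sum]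
    refine Finset.sum_le_sum fun i _ => ?_
    refine ((M i).norm_iteratedFDeriv_comp_left (dv_contDiff (v := b i) hG).contDiffAt
      (coe_le_top' j)).trans ?_
    gcongr
    have := Finset.single_le_sum (f := fun i => ‖M i‖) (fun i _ => norm_nonneg (M i)) (Finset.mem_univ i)
    linarith
  · intro i _
    exact (((M i).contDiff.comp (dv_contDiff (v := b i) hG)).contDiffAt).of_le (coe_le_top' j)

theorem dv_comm {G : E → ℂ} (hG : ContDiff ℝ (⊤ : ℕ∞) G) (u v : E) :
    dv u (dv v G) = dv v (dv u G) := by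
  have h1 : ContDiff ℝ (⊤ : ℕ∞) (fderiv ℝ G) := hG.fderiv_right (by simp)
  have key : ∀ a b : E, ∀ x, dv a (dv b G) x = fderiv ℝ (fderiv ℝ G) x a b := by
    intro a b x
    unfold dv
    have := ((h1.differentiable (by simp) x).hasFDerivAt.clm_apply
      (hasFDerivAt_const b x)).fderiv
    rw [this]; simp
  ext x
  rw [key, key]
  exact (hG.contDiffAt (x := x)).isSymmSndFDerivAt (by simp; exact coe_le_top' 2) u v

theorem dv_iter_contDiff {G : E → ℂ} (hG : ContDiff ℝ (⊤ : ℕ∞) G) (v : E) (k : ℕ) :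
    ContDiff ℝ (⊤ : ℕ∞) ((dv v)^[k] G) := by
  induction k with
  | zero => exact hG
  | succ k ih => rw [Function.iterate_succ_apply']; exact dv_contDiff ih

/-- Multi-index derivative along given directions. -/
def mf {ι : Type*} (e : ι → E) (L : List ι) (α : ι → ℕ) (G : E → ℂ) : E → ℂ :=
  L.foldr (fun i g => (dv (e i))^[α i] g) G

theorem mf_contDiff {ι : Type*} (e : ι → E) (L : List ι) (α : ι → ℕ) {G : E → ℂ}
    (hG : ContDiff ℝ (⊤ : ℕ∞) G) : ContDiff ℝ (⊤ : ℕ∞) (mf e L α G) := by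
  induction L with
  | nil => exact hG
  | cons i L ih => exact dv_iter_contDiff ih _ _

theorem dv_iter_comm {G : E → ℂ} (hG : ContDiff ℝ (⊤ : ℕ∞) G) (u v : E) (k : ℕ) :
    dv u ((dv v)^[k] G) = (dv v)^[k] (dv u G) := by
  induction k with
  | zero => rfl
  | succ k ih =>
    rw [Function.iterate_succ_apply', Function.iterate_succ_apply', ← ih,
      dv_comm (dv_iter_contDiff hG v k)]

theorem dv_mf_comm {ι : Type*} (e : ι → E) (L : List ι) (α : ι → ℕ) {G : E → ℂ}
    (hG : ContDiff ℝ (⊤ : ℕ∞) G) (u : E) : dv u (mf e L α G) = mf e L α (dv u G) := by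
  induction L with
  | nil => rfl
  | cons i L ih =>
    change dv u ((dv (e i))^[α i] (mf e L α G)) = (dv (e i))^[α i] (mf e L α (dv u G))
    rw [dv_iter_comm (mf_contDiff e L α hG), ih]

theorem mf_notMem {ι : Type*} [DecidableEq ι] (e : ι → E) (L : List ι) (α : ι → ℕ) (G : E → ℂ)
    (i₀ : ι) (h : i₀ ∉ L) : mf e L (α + Pi.single i₀ 1) G = mf e L α G := by
  induction L with
  | nil => rfl
  | cons i L ih =>
    change (dv (e i))^[(α + Pi.single i₀ 1 : ι → ℕ) i] (mf e L (α + Pi.single i₀ 1) G) =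
      (dv (e i))^[α i] (mf e L α G)
    simp only [List.mem_cons, not_or] at h
    rw [ih h.2]
    simp [Pi.single_apply, Ne.symm h.1]

theorem mf_add {ι : Type*} [DecidableEq ι] (e : ι → E) (L : List ι) (hL : L.Nodup) (α : ι → ℕ)
    {G : E → ℂ} (hG : ContDiff ℝ (⊤ : ℕ∞) G) (i₀ : ι) (h : i₀ ∈ L) :
    mf e L α (dv (e i₀) G) = mf e L (α + Pi.single i₀ 1) G := by
  induction L with
  | nil => simp at h
  | cons i L ih =>
    change (dv (e i))^[α i] (mf e L α (dv (e i₀) G)) =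
      (dv (e i))^[(α + Pi.single i₀ 1 : ι → ℕ) i] (mf e L (α + Pi.single i₀ 1) G)
    rw [List.nodup_cons] at hL
    by_cases hi : i = i₀
    · subst hi
      rw [mf_notMem e L α G i hL.1, ← dv_mf_comm e L α hG, ← Function.iterate_succ_apply]
      simp
    · have : i₀ ∈ L := by
        rcases List.mem_cons.mp h with h' | h'
        · exact absurd h'.symm hi
        · exact h'
      rw [ih hL.2 this]
      simp [Pi.single_apply, hi]

end derivs

/-- Coordinate directions in the first variable. -/
def e1 {n : ℕ} (i : Fin n) : En n × En n := (EuclideanSpace.single i 1, 0)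
/-- Coordinate directions in the second variable. -/
def e2 {n : ℕ} (i : Fin n) : En n × En n := (0, EuclideanSpace.single i 1)

/-- Mixed derivatives of a function on the product. -/
def QQ {n : ℕ} (α : (Fin n → ℕ) × (Fin n → ℕ)) (G : En n × En n → ℂ) : En n × En n → ℂ :=
  mf e1 (List.finRange n) α.1 (mf e2 (List.finRange n) α.2 G)

theorem QQ_contDiff {n : ℕ} (α : (Fin n → ℕ) × (Fin n → ℕ)) {G : En n × En n → ℂ}
    (hG : ContDiff ℝ (⊤ : ℕ∞) G) : ContDiff ℝ (⊤ : ℕ∞) (QQ α G) :=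
  mf_contDiff _ _ _ (mf_contDiff _ _ _ hG)

theorem QQ_add1 {n : ℕ} (α : (Fin n → ℕ) × (Fin n → ℕ)) {G : En n × En n → ℂ}
    (hG : ContDiff ℝ (⊤ : ℕ∞) G) (i : Fin n) :
    QQ α (dv (e1 i) G) = QQ (α.1 + Pi.single i 1, α.2) G := by
  unfold QQ
  rw [← dv_mf_comm _ _ _ hG, mf_add _ _ (List.nodup_finRange n) _ (mf_contDiff _ _ _ hG) _
    (List.mem_finRange i)]

theorem QQ_add2 {n : ℕ} (α : (Fin n → ℕ) × (Fin n → ℕ)) {G : En n × En n → ℂ}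
    (hG : ContDiff ℝ (⊤ : ℕ∞) G) (i : Fin n) :
    QQ α (dv (e2 i) G) = QQ (α.1, α.2 + Pi.single i 1) G := by
  unfold QQ
  rw [mf_add _ _ (List.nodup_finRange n) _ hG _ (List.mem_finRange i)]

theorem mf_slice_right {n : ℕ} {F : En n × En n → ℂ} (hF : ContDiff ℝ (⊤ : ℕ∞) F)
    (L : List (Fin n)) (α : Fin n → ℕ) (ξ : En n) :
    (fun η => mf e2 L α F (ξ, η)) = L.foldr (fun i g => (pd i)^[α i] g) (fun η => F (ξ, η)) := by
  induction L with
  | nil => rfl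
  | cons i L ih =>
    have h : ∀ k, (fun η => ((dv (e2 i))^[k] (mf e2 L α F)) (ξ, η)) =
        (pd i)^[k] (fun η => mf e2 L α F (ξ, η)) := by
      intro k
      induction k with
      | zero => rfl
      | succ k ihk =>
        rw [Function.iterate_succ_apply', Function.iterate_succ_apply', ← ihk]
        exact dv_slice_right (dv_iter_contDiff (mf_contDiff _ _ _ hF) _ _) _ ξ
    rw [List.foldr_cons, ← ih]
    exact h (α i)

theorem mf_slice_left {n : ℕ} {F : En n × En n → ℂ} (hF : ContDiff ℝ (⊤ : ℕ∞) F)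
    (L : List (Fin n)) (α : Fin n → ℕ) (η : En n) :
    (fun ξ => mf e1 L α F (ξ, η)) = L.foldr (fun i g => (pd i)^[α i] g) (fun ξ => F (ξ, η)) := by
  induction L with
  | nil => rfl
  | cons i L ih =>
    have h : ∀ k, (fun ξ => ((dv (e1 i))^[k] (mf e1 L α F)) (ξ, η)) =
        (pd i)^[k] (fun ξ => mf e1 L α F (ξ, η)) := by
      intro k
      induction k with
      | zero => rfl
      | succ k ihk =>
        rw [Function.iterate_succ_apply', Function.iterate_succ_apply', ← ihk]
        exact dv_slice_left (dv_iter_contDiff (mf_contDiff _ _ _ hF) _ _) _ η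
    rw [List.foldr_cons, ← ih]
    exact h (α i)

theorem QQ_eq_d2 {n : ℕ} (α : (Fin n → ℕ) × (Fin n → ℕ)) (a : En n → En n → En n → ℂ) (x : En n)
    (ha : ContDiff ℝ (⊤ : ℕ∞) (fun q : En n × En n => a x q.1 q.2)) (w : En n × En n) :
    QQ α (fun q : En n × En n => a x q.1 q.2) w = d2 α.1 α.2 a x w.1 w.2 := by
  have h1 := mf_slice_left (mf_contDiff e2 (List.finRange n) α.2 ha) (List.finRange n) α.1 w.2
  have h2 : (fun ξ => mf e2 (List.finRange n) α.2 (fun q : En n × En n => a x q.1 q.2) (ξ, w.2)) =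
      fun ζ => mderiv α.2 (fun θ => a x ζ θ) w.2 := by
    ext ζ
    exact congrFun (mf_slice_right ha (List.finRange n) α.2 ζ) w.2
  rw [h2] at h1
  exact congrFun h1 w.1

/-- Pairs of multi-indices of total order `j`. -/
def idx (n j : ℕ) : Finset ((Fin n → ℕ) × (Fin n → ℕ)) :=
  ((Fintype.piFinset fun _ : Fin n => Finset.range (j + 1)) ×ˢ
    (Fintype.piFinset fun _ : Fin n => Finset.range (j + 1))).filter
      fun α => mdeg α.1 + mdeg α.2 = j

theorem mem_idx {n j : ℕ} {α : (Fin n → ℕ) × (Fin n → ℕ)} :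
    α ∈ idx n j ↔ mdeg α.1 + mdeg α.2 = j := by
  unfold idx
  rw [Finset.mem_filter, and_iff_right_iff_imp]
  intro h
  have hle : ∀ (β : Fin n → ℕ) (i : Fin n), β i ≤ mdeg β := fun β i =>
    Finset.single_le_sum (f := β) (fun _ _ => Nat.zero_le _) (Finset.mem_univ i)
  simp only [Finset.mem_product, Fintype.mem_piFinset, Finset.mem_range]
  constructor
  · intro i; have := hle α.1 i; omega
  · intro i; have := hle α.2 i; omega

theorem mdeg_add_single {n : ℕ} (β : Fin n → ℕ) (i : Fin n) :
    mdeg (β + Pi.single i 1) = mdeg β + 1 := by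
  unfold mdeg
  simp [Finset.sum_add_distrib]

theorem iFD_le_QQ (n j : ℕ) : ∃ C : ℝ, 0 < C ∧ ∀ (G : En n × En n → ℂ),
    ContDiff ℝ (⊤ : ℕ∞) G → ∀ w, ‖iteratedFDeriv ℝ j G w‖ ≤ C * ∑ α ∈ idx n j, ‖QQ α G w‖ := by
  induction j with
  | zero =>
    refine ⟨1, one_pos, ?_⟩
    intro G hG w
    rw [norm_iteratedFDeriv_zero, one_mul]
    have h0 : QQ (0 : (Fin n → ℕ) × (Fin n → ℕ)) G = G := by
      have : ∀ (e : Fin n → En n × En n) (L : List (Fin n)) , mf e L 0 G = G := by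
        intro e L
        induction L with
        | nil => rfl
        | cons i L ih => exact ih
      unfold QQ
      change mf e1 _ 0 (mf e2 _ 0 G) = G
      rw [this, this]
    have := Finset.single_le_sum (s := idx n 0) (f := fun α => ‖QQ α G w‖)
      (fun _ _ => norm_nonneg _) (mem_idx (α := 0) |>.mpr (by simp [mdeg]))
    simpa only [h0] using this
  | succ j ih =>
    obtain ⟨C, hC, h⟩ := ih
    let b := (EuclideanSpace.basisFun (Fin n) ℝ).toBasis.prod (EuclideanSpace.basisFun (Fin n) ℝ).toBasis
    have hb1 : ∀ i, b (Sum.inl i) = e1 i := by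
      intro i; ext <;> simp [b, e1]
    have hb2 : ∀ i, b (Sum.inr i) = e2 i := by
      intro i; ext <;> simp [b, e2]
    obtain ⟨C', hC', h'⟩ := iFD_succ_le b
    refine ⟨C' * (C * (2 * n + 1)), by positivity, ?_⟩
    intro G hG w
    refine (h' G hG j w).trans ?_
    rw [mul_assoc]
    gcongr
    set S := ∑ α ∈ idx n (j + 1), ‖QQ α G w‖ with hS
    have hS0 : 0 ≤ S := by positivity
    have hb : ∀ i, ‖iteratedFDeriv ℝ j (dv (b i) G) w‖ ≤ C * S := by
      intro i
      refine (h _ (dv_contDiff hG) w).trans ?_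
      gcongr
      rcases i with i | i
      · rw [hb1, hS]
        have hinj : Set.InjOn (fun α : (Fin n → ℕ) × (Fin n → ℕ) => ((α.1 + Pi.single i 1, α.2) :
            (Fin n → ℕ) × (Fin n → ℕ))) (idx n j) := by
          intro α _ β _ hαβ
          simp only [Prod.mk.injEq, add_left_inj] at hαβ
          exact Prod.ext hαβ.1 hαβ.2
        have him := Finset.sum_image (f := fun α => ‖QQ α G w‖) hinj
        have hq : ∀ α ∈ idx n j, ‖QQ α (dv (e1 i) G) w‖ = ‖QQ (((α.1 + Pi.single i 1, α.2) :
            (Fin n → ℕ) × (Fin n → ℕ))) G w‖ := by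
          intro α _
          rw [QQ_add1 _ hG]
        rw [Finset.sum_congr rfl hq]
        refine (le_of_eq him.symm).trans ?_
        · refine Finset.sum_le_sum_of_subset_of_nonneg ?_ (fun _ _ _ => norm_nonneg _)
          intro β hβ
          obtain ⟨α, hα, rfl⟩ := Finset.mem_image.mp hβ
          rw [mem_idx] at hα ⊢
          simp only [mdeg_add_single]; omega
      · rw [hb2, hS]
        have hinj : Set.InjOn (fun α : (Fin n → ℕ) × (Fin n → ℕ) => ((α.1, α.2 + Pi.single i 1) :
            (Fin n → ℕ) × (Fin n → ℕ))) (idx n j) := by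
          intro α _ β _ hαβ
          simp only [Prod.mk.injEq, add_left_inj] at hαβ
          exact Prod.ext hαβ.1 hαβ.2
        have him := Finset.sum_image (f := fun α => ‖QQ α G w‖) hinj
        have hq : ∀ α ∈ idx n j, ‖QQ α (dv (e2 i) G) w‖ = ‖QQ (((α.1, α.2 + Pi.single i 1) :
            (Fin n → ℕ) × (Fin n → ℕ))) G w‖ := by
          intro α _
          rw [QQ_add2 _ hG]
        rw [Finset.sum_congr rfl hq]
        refine (le_of_eq him.symm).trans ?_
        · refine Finset.sum_le_sum_of_subset_of_nonneg ?_ (fun _ _ _ => norm_nonneg _)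
          intro β hβ
          obtain ⟨α, hα, rfl⟩ := Finset.mem_image.mp hβ
          rw [mem_idx] at hα ⊢
          simp only [mdeg_add_single]; omega
    calc _ ≤ ∑ i : Fin n ⊕ Fin n, C * S := Finset.sum_le_sum fun i _ => hb i
      _ = (2 * n) * (C * S) := by
        rw [Finset.sum_const, Finset.card_univ, Fintype.card_sum, Fintype.card_fin, nsmul_eq_mul]; push_cast; ring
      _ ≤ _ := by
        have : 0 ≤ C * S := by positivity
        nlinarith

theorem DD_le (n : ℕ) : ∃ C : ℝ, 0 < C ∧ ∀ (G ψ : En n × En n → ℂ) (l B : ℝ) (w : En n × En n),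
    0 < l → ContDiff ℝ (⊤ : ℕ∞) G → ContDiff ℝ (⊤ : ℕ∞) ψ →
    (∀ i ≤ 4 * n, l ^ i * ‖iteratedFDeriv ℝ i ψ w‖ ≤ B) →
    ‖DD l (fun y => G y * ψ y) w‖ ≤
      C * B * ∑ j ∈ Finset.range (4 * n + 1), ∑ α ∈ idx n j, l ^ j * ‖QQ α G w‖ := by
  choose C hC h using iFD_le_QQ n
  set K := ∑ j ∈ Finset.range (4 * n + 1), C j with hK
  have hK0 : 0 < K := Finset.sum_pos (fun j _ => hC j) (by simp)
  refine ⟨2 ^ n * (2 ^ n * (2 ^ (4 * n) * K)), by positivity, ?_⟩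
  intro G ψ l B w hl hG hψ hB
  have hB0 : 0 ≤ B := le_trans (by positivity) (hB 0 (by omega))
  have hF : ContDiff ℝ (⊤ : ℕ∞) (fun y => G y * ψ y) := hG.mul hψ
  have h1 := iFD_mul_le hl hG hψ hB
  have hb1 : ∀ v ∈ (bas n).map (fun v => (v, (0 : En n))), ‖v‖ ≤ 1 := by
    intro v hv
    simp only [bas, List.map_map, List.mem_map] at hv
    obtain ⟨i, _, rfl⟩ := hv
    simp [Prod.norm_def]
  have hb2 : ∀ v ∈ (bas n).map (fun v => ((0 : En n), v)), ‖v‖ ≤ 1 := by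
    intro v hv
    simp only [bas, List.map_map, List.mem_map] at hv
    obtain ⟨i, _, rfl⟩ := hv
    simp [Prod.norm_def]
  have hl1 : ((bas n).map (fun v => (v, (0 : En n)))).length = n := by simp [bas]
  have hl2 : ((bas n).map (fun v => ((0 : En n), v))).length = n := by simp [bas]
  have h2 := iFD_DopL_le hl _ hb1 hF (K := 2 * n) (fun i hi => h1 i (by rw [hl1] at hi; omega))
  have h3 := iFD_DopL_le hl _ hb2 (DopL_contDiff hF) (K := 0)
    (fun i hi => h2 i (by rw [hl2] at hi; omega)) 0 le_rfl
  rw [hl1, hl2, pow_zero, one_mul, norm_iteratedFDeriv_zero] at h3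
  refine h3.trans ?_
  have h4 : ∑ j ∈ Finset.range (4 * n + 1), l ^ j * ‖iteratedFDeriv ℝ j G w‖ ≤
      K * ∑ j ∈ Finset.range (4 * n + 1), ∑ α ∈ idx n j, l ^ j * ‖QQ α G w‖ := by
    rw [Finset.mul_sum]
    refine Finset.sum_le_sum fun j hj => ?_
    rw [← Finset.mul_sum]
    have hCK : C j ≤ K := Finset.single_le_sum (f := C) (fun j _ => (hC j).le) hj
    calc _ ≤ l ^ j * (K * ∑ α ∈ idx n j, ‖QQ α G w‖) := by
          gcongr
          exact (h j G hG w).trans (by gcongr)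
      _ = _ := by ring
  calc _ ≤ 2 ^ n * (2 ^ n * (2 ^ (4 * n) * B *
      (K * ∑ j ∈ Finset.range (4 * n + 1), ∑ α ∈ idx n j, l ^ j * ‖QQ α G w‖))) := by gcongr
    _ = _ := by ring

/-! ### Dyadic partition of unity -/

/-- A smooth cutoff on the doubled frequency space. -/
def chiW {n : ℕ} (w : En n × En n) : ℂ := ((lchi (‖w.1‖ ^ 2) * lchi (‖w.2‖ ^ 2) : ℝ) : ℂ)

theorem chiW_contDiff {n : ℕ} : ContDiff ℝ (⊤ : ℕ∞) (chiW (n := n)) := by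
  unfold chiW
  refine Complex.ofRealCLM.contDiff.comp ?_
  refine (lchi_contDiff.comp ?_).mul (lchi_contDiff.comp ?_)
  · exact contDiff_fst.norm_sq ℝ
  · exact contDiff_snd.norm_sq ℝ

theorem chiW_one {n : ℕ} {w : En n × En n} (h : ‖w‖ ≤ 1) : chiW w = 1 := by
  have h1 : ‖w.1‖ ≤ 1 := (norm_fst_le w).trans h
  have h2 : ‖w.2‖ ≤ 1 := (norm_snd_le w).trans h
  unfold chiW
  rw [lchi_one (by nlinarith [norm_nonneg w.1]), lchi_one (by nlinarith [norm_nonneg w.2])]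
  simp

theorem chiW_zero {n : ℕ} {w : En n × En n} (h : 2 ≤ ‖w‖) : chiW w = 0 := by
  unfold chiW
  rcases le_max_iff.mp (Prod.norm_def (x := w) ▸ h) with h | h
  · rw [lchi_zero (by nlinarith)]; simp
  · rw [lchi_zero (u := ‖w.2‖ ^ 2) (by nlinarith)]; simp

theorem chiW_norm_le {n : ℕ} (w : En n × En n) : ‖chiW w‖ ≤ 1 := by
  unfold chiW
  rw [Complex.norm_real, Real.norm_eq_abs, abs_of_nonneg (mul_nonneg (lchi_nonneg _) (lchi_nonneg _))]
  exact mul_le_one₀ (lchi_le_one _) (lchi_nonneg _) (lchi_le_one _)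

/-- The unscaled pieces. -/
def thW {n : ℕ} (k : ℕ) (w : En n × En n) : ℂ :=
  if k = 0 then chiW w else chiW w - chiW ((2 : ℝ) • w)

/-- The dyadic pieces. -/
def psW {n : ℕ} (k : ℕ) (w : En n × En n) : ℂ := thW k (((2 : ℝ) ^ k)⁻¹ • w)

theorem thW_contDiff {n : ℕ} (k : ℕ) : ContDiff ℝ (⊤ : ℕ∞) (thW (n := n) k) := by
  unfold thW
  by_cases hk : k = 0
  · simp only [hk, if_true]; exact chiW_contDiff
  · simp only [hk, if_false]
    exact chiW_contDiff.sub (chiW_contDiff.comp (contDiff_const_smul (2 : ℝ)))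

theorem psW_contDiff {n : ℕ} (k : ℕ) : ContDiff ℝ (⊤ : ℕ∞) (psW (n := n) k) :=
  (thW_contDiff k).comp (contDiff_const_smul _)

theorem thW_zero {n : ℕ} (k : ℕ) {w : En n × En n} (h : 2 ≤ ‖w‖) : thW k w = 0 := by
  unfold thW
  have : chiW ((2 : ℝ) • w) = 0 := chiW_zero (by rw [norm_smul]; norm_num; linarith)
  split_ifs <;> simp [chiW_zero h, this]

theorem thW_zero' {n : ℕ} {k : ℕ} (hk : k ≠ 0) {w : En n × En n} (h : 2 * ‖w‖ ≤ 1) :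
    thW k w = 0 := by
  unfold thW
  rw [if_neg hk, chiW_one (by linarith [norm_nonneg w]), chiW_one (by rw [norm_smul]; norm_num; linarith)]
  simp

theorem norm_sc {n : ℕ} (k : ℕ) (w : En n × En n) :
    ‖((2 : ℝ) ^ k)⁻¹ • w‖ = ‖w‖ / 2 ^ k := by
  rw [norm_smul, norm_inv, norm_pow]; norm_num; ring

theorem psW_zero {n : ℕ} (k : ℕ) {w : En n × En n} (h : 2 ^ (k + 1) < ‖w‖) : psW k w = 0 := by
  refine thW_zero k ?_
  rw [norm_sc, le_div_iff₀ (by positivity)]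
  rw [pow_succ] at h; linarith

theorem psW_zero' {n : ℕ} (k : ℕ) {w : En n × En n} (h : 2 * (1 + ‖w‖) < 2 ^ k) : psW k w = 0 := by
  have hk : k ≠ 0 := by
    rintro rfl
    simp at h; linarith [norm_nonneg w]
  refine thW_zero' hk ?_
  rw [norm_sc, ← mul_div_assoc, div_le_one (by positivity)]
  linarith

theorem psW_sum {n : ℕ} (N : ℕ) (w : En n × En n) :
    ∑ k ∈ Finset.range (N + 1), psW k w = chiW (((2 : ℝ) ^ N)⁻¹ • w) := by
  induction N with
  | zero => simp [psW, thW]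
  | succ N ih =>
    rw [Finset.sum_range_succ, ih]
    simp only [psW, thW]
    rw [if_neg (by omega), smul_smul]
    have : (2 : ℝ) * (2 ^ (N + 1))⁻¹ = (2 ^ N)⁻¹ := by
      rw [pow_succ]; field_simp
    rw [this]; ring

/-- The dyadic region. -/
def regW (n : ℕ) (k : ℕ) : Set (En n × En n) :=
  {w | ‖w‖ ≤ 2 ^ (k + 1) ∧ 2 ^ k ≤ 2 * (1 + ‖w‖)}

theorem regW_closed {n k : ℕ} : IsClosed (regW n k) := by
  have h1 : IsClosed {w : En n × En n | ‖w‖ ≤ 2 ^ (k + 1)} :=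
    isClosed_le continuous_norm continuous_const
  have h2 : IsClosed {w : En n × En n | 2 ^ k ≤ 2 * (1 + ‖w‖)} :=
    isClosed_le continuous_const (continuous_const.mul (continuous_const.add continuous_norm))
  exact h1.inter h2

theorem psW_iFD_zero {n : ℕ} (k i : ℕ) {w : En n × En n} (h : w ∉ regW n k) :
    iteratedFDeriv ℝ i (psW k) w = 0 := by
  have h1 : tsupport (psW (n := n) k) ⊆ regW n k := by
    refine closure_minimal ?_ regW_closed
    intro y hy
    refine ⟨?_, ?_⟩
    · by_contra! h'
      exact hy (psW_zero k h')
    · by_contra! h'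
      exact hy (psW_zero' k h')
  by_contra h'
  exact h (h1 (support_iteratedFDeriv_subset i h'))

theorem thW_bdd (n k i : ℕ) : ∃ B : ℝ, ∀ w, ‖iteratedFDeriv ℝ i (thW (n := n) k) w‖ ≤ B := by
  have hc : HasCompactSupport (thW (n := n) k) := by
    refine HasCompactSupport.of_support_subset_isCompact (isCompact_closedBall 0 2) ?_
    intro w hw
    rw [mem_closedBall_zero_iff]
    by_contra! h
    exact hw (thW_zero k h.le)
  exact (hc.iteratedFDeriv (𝕜 := ℝ) i).exists_bound_of_continuous
    ((thW_contDiff k).continuous_iteratedFDeriv (coe_le_top' i))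

theorem psW_bdd (n K : ℕ) : ∃ B : ℝ, 0 < B ∧ ∀ k i l w, i ≤ K → 0 < l → l ≤ 2 ^ k →
    l ^ i * ‖iteratedFDeriv ℝ i (psW (n := n) k) w‖ ≤ B := by
  choose B hB using thW_bdd n
  refine ⟨1 + ∑ i ∈ Finset.range (K + 1), (|B 0 i| + |B 1 i|), by positivity, ?_⟩
  intro k i l w hi hl hlk
  have h1 : ‖iteratedFDeriv ℝ i (thW (n := n) k) (((2 : ℝ) ^ k)⁻¹ • w)‖ ≤ |B 0 i| + |B 1 i| := by
    by_cases hk : k = 0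
    · subst hk
      exact (hB 0 i _).trans ((le_abs_self _).trans (by linarith [abs_nonneg (B 1 i)]))
    · have : thW (n := n) k = thW 1 := by ext w; simp [thW, hk]
      rw [this]
      exact (hB 1 i _).trans ((le_abs_self _).trans (by linarith [abs_nonneg (B 0 i)]))
  have h2 : iteratedFDeriv ℝ i (psW (n := n) k) w =
      (((2 : ℝ) ^ k)⁻¹) ^ i • iteratedFDeriv ℝ i (thW (n := n) k) (((2 : ℝ) ^ k)⁻¹ • w) := by
    have := iteratedFDeriv_comp_const_smul (i := i) (f := thW (n := n) k) (((2 : ℝ) ^ k)⁻¹)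
      ((thW_contDiff k).of_le (coe_le_top' i))
    exact congrFun this w
  rw [h2, norm_smul, ← mul_assoc, norm_pow, norm_inv, norm_pow, Real.norm_two, ← mul_pow]
  have h3 : (l * (2 ^ k)⁻¹) ^ i ≤ 1 := by
    refine pow_le_one₀ (by positivity) ?_
    rw [← div_eq_mul_inv, div_le_one (by positivity)]; exact hlk
  have h4 : |B 0 i| + |B 1 i| ≤ ∑ i ∈ Finset.range (K + 1), (|B 0 i| + |B 1 i|) :=
    Finset.single_le_sum (f := fun i => |B 0 i| + |B 1 i|) (fun _ _ => by positivity)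
      (Finset.mem_range.mpr (by omega))
  calc _ ≤ 1 * (|B 0 i| + |B 1 i|) := by gcongr
    _ ≤ _ := by linarith

theorem regW_pow {n k : ℕ} {w : En n × En n} (hw : w ∈ regW n k) (e : ℝ) :
    (1 + ‖w.1‖ + ‖w.2‖) ^ e ≤ 8 ^ |e| * ((2 : ℝ) ^ k) ^ e := by
  obtain ⟨h1, h2⟩ := hw
  have a1 := norm_fst_le w
  have a2 := norm_snd_le w
  have a3 : ‖w‖ ≤ ‖w.1‖ + ‖w.2‖ := by
    rw [Prod.norm_def]
    exact max_le (by linarith [norm_nonneg w.2]) (by linarith [norm_nonneg w.1])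
  have hk : (1 : ℝ) ≤ 2 ^ k := one_le_pow₀ (by norm_num)
  rw [pow_succ] at h1
  set y := 1 + ‖w.1‖ + ‖w.2‖ with hy
  have y1 : y ≤ 8 * 2 ^ k := by linarith
  have y2 : (2 : ℝ) ^ k ≤ 8 * y := by
    have := norm_nonneg w; nlinarith
  have y0 : 0 < y := by positivity
  rcases le_total 0 e with he | he
  · rw [abs_of_nonneg he, ← Real.mul_rpow (by norm_num) (by positivity)]
    exact Real.rpow_le_rpow y0.le y1 he
  · rw [abs_of_nonpos he, Real.rpow_neg (by norm_num), ← Real.inv_rpow (by norm_num),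
      ← Real.mul_rpow (by norm_num) (by positivity)]
    refine Real.rpow_le_rpow_of_nonpos (by positivity) ?_ he
    linarith

/-- The operator is dominated by the sum of its dyadic pieces. -/
theorem int_le_tsum {n : ℕ} (H : En n × En n → ℂ) :
    ‖∫ w, H w‖ₑ ≤ ∑' k, ‖∫ w, psW k w * H w‖ₑ := by
  by_cases hH : Integrable H
  swap
  · rw [integral_undef hH]; simp
  have hpsint : ∀ k, Integrable (fun w => psW k w * H w) := by
    intro k
    obtain ⟨B, hB⟩ := thW_bdd n k 0
    refine hH.bdd_mul (c := B) (psW_contDiff k).continuous.aestronglyMeasurable (ae_of_all _ fun w => ?_)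
    have := hB (((2 : ℝ) ^ k)⁻¹ • w)
    rwa [norm_iteratedFDeriv_zero] at this
  have hsum : ∀ N : ℕ, ∫ w, chiW (((2 : ℝ) ^ N)⁻¹ • w) * H w =
      ∑ k ∈ Finset.range (N + 1), ∫ w, psW k w * H w := by
    intro N
    rw [← integral_finsetSum _ (fun k _ => hpsint k)]
    congr 1; ext w
    rw [← Finset.sum_mul, psW_sum]
  have hlim : Filter.Tendsto (fun N : ℕ => ∫ w, chiW (((2 : ℝ) ^ N)⁻¹ • w) * H w) Filter.atTop
      (nhds (∫ w, H w)) := by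
    refine tendsto_integral_of_dominated_convergence (fun w => ‖H w‖) ?_ hH.norm ?_ ?_
    · intro N
      exact (chiW_contDiff.continuous.comp (continuous_const_smul _)).aestronglyMeasurable.mul
        hH.aestronglyMeasurable
    · intro N
      refine ae_of_all _ fun w => ?_
      rw [norm_mul]
      exact mul_le_of_le_one_left (norm_nonneg _) (chiW_norm_le _)
    · refine ae_of_all _ fun w => ?_
      refine tendsto_const_nhds.congr' ?_
      obtain ⟨N, hN⟩ := pow_unbounded_of_one_lt ‖w‖ (by norm_num : (1 : ℝ) < 2)
      filter_upwards [Filter.eventually_ge_atTop N] with M hM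
      rw [chiW_one, one_mul]
      rw [norm_sc, div_le_one (by positivity)]
      exact hN.le.trans (pow_le_pow_right₀ (by norm_num) hM)
  have hlim2 : Filter.Tendsto (fun N : ℕ => ‖∫ w, chiW (((2 : ℝ) ^ N)⁻¹ • w) * H w‖ₑ) Filter.atTop
      (nhds ‖∫ w, H w‖ₑ) := hlim.enorm
  refine le_of_tendsto' hlim2 fun N => ?_
  rw [hsum]
  exact (enorm_sum_le _ _).trans (ENNReal.sum_le_tsum _)

/-! ### Lebesgue bounds for the factors -/

theorem enn_cmul {X : Type*} [MeasurableSpace X] {μ : Measure X} {p : ℝ≥0∞} (hp : p ≠ 0)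
    {F : X → ℝ≥0∞} (hF : AEMeasurable F μ) (c : ℝ≥0∞) :
    eLpNorm (fun x => c * F x) p μ ≤ c * eLpNorm F p μ := by
  have h := enn_holder (μ := μ) (F := fun _ => c) (G := F) (p := ∞) (q := p) (r := p)
    aemeasurable_const hF (by simp) (by simp) hp
  refine h.trans ?_
  gcongr
  rw [eLpNorm_exponent_top]
  exact eLpNormEssSup_le_of_ae_enorm_bound (ae_of_all _ fun _ => le_rfl)

theorem Phi_meas {n : ℕ} {l s : ℝ} (hl : 0 < l) {f : En n → ℂ} (hf : Continuous f) :
    Measurable (Phi l s f) := by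
  have : IsFiniteMeasure (wnu n l) := ⟨by rw [wnu_univ hl]; exact ENNReal.ofReal_lt_top⟩
  unfold Phi
  have h1 : Measurable (fun z : En n × En n => ‖f (z.1 + z.2)‖ₑ ^ s) :=
    ((hf.comp (continuous_fst.add continuous_snd)).measurable.enorm).pow_const s
  exact h1.lintegral_prod_right'.pow_const _

theorem Phi_Lq {n : ℕ} {l s : ℝ} (hl : 0 < l) (hs : 0 < s) {q : ℝ≥0∞} (hsq : ENNReal.ofReal s ≤ q)
    {f : En n → ℂ} (hf : Continuous f) :
    eLpNorm (Phi l s f) q volume ≤ ENNReal.ofReal (((π / l) ^ n) ^ (1 / s)) * eLpNorm f q volume := by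
  have : IsFiniteMeasure (wnu n l) := ⟨by rw [wnu_univ hl]; exact ENNReal.ofReal_lt_top⟩
  have h1 : Measurable (Function.uncurry (fun x z : En n => ‖f (x + z)‖ₑ)) :=
    ((hf.comp (continuous_fst.add continuous_snd)).measurable.enorm)
  have h2 := enn_mixed (μ := volume) (ν := wnu n l) h1 hs hsq (C := eLpNorm f q volume) (by
    intro z
    rw [eLpNorm_enorm]
    exact (eLpNorm_comp_measurePreserving hf.aestronglyMeasurable
      (measurePreserving_add_right volume z)).le)
  refine h2.trans ?_
  rw [wnu_univ hl, ENNReal.ofReal_rpow_of_nonneg (by positivity) (by positivity), mul_comm]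

theorem regW_vol (n : ℕ) : ∃ V : ℝ, 0 < V ∧ ∀ k, volume (regW n k) ≤
    ENNReal.ofReal (V * ((2 : ℝ) ^ k) ^ (2 * n)) := by
  refine ⟨2 ^ (2 * n) * (volume (Metric.ball (0 : En n × En n) 1)).toReal, ?_, ?_⟩
  · have : 0 < (volume (Metric.ball (0 : En n × En n) 1)).toReal :=
      ENNReal.toReal_pos (Metric.measure_ball_pos volume _ one_pos).ne' measure_ball_lt_top.ne
    positivity
  · intro k
    have h1 : regW n k ⊆ Metric.closedBall 0 (2 ^ (k + 1)) := by
      intro w hw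
      rw [mem_closedBall_zero_iff]; exact hw.1
    refine (measure_mono h1).trans ?_
    have : (volume : Measure (En n × En n)).IsAddHaarMeasure := by
      rw [Measure.volume_eq_prod]; infer_instance
    rw [Measure.addHaar_closedBall _ _ (by positivity)]
    have e : Module.finrank ℝ (En n × En n) = 2 * n := by
      rw [Module.finrank_prod]; simp; omega
    rw [e, show (2 : ℝ) ^ (2 * n) * (volume (Metric.ball (0 : En n × En n) 1)).toReal *
      ((2 : ℝ) ^ k) ^ (2 * n) = (2 ^ (k + 1)) ^ (2 * n) *
        (volume (Metric.ball (0 : En n × En n) 1)).toReal by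
        rw [pow_succ (2 : ℝ) k, mul_pow]; ring,
      ENNReal.ofReal_mul (by positivity), ENNReal.ofReal_toReal measure_ball_lt_top.ne]

theorem U_est {n : ℕ} {p : ℝ≥0∞} (hp : 1 ≤ p) {m ρ t : ℝ} (hρ1 : ρ ≤ 1) (ht : 0 < t)
    (htp : ENNReal.ofReal t ≤ p) {a : En n → En n → En n → ℂ} (ha : LpSm2 p m ρ a) :
    ∃ (C : ℝ) (U : ℕ → En n → ℝ≥0∞), 0 < C ∧ (∀ k, Measurable (U k)) ∧
      (∀ᵐ x : En n, ∀ k : ℕ, (∫⁻ w, ‖DD (((2 : ℝ) ^ k) ^ ρ)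
        (fun w : En n × En n => a x w.1 w.2 * psW k w) w‖ₑ ^ t) ^ (1 / t) ≤ U k x) ∧
      ∀ k : ℕ, eLpNorm (U k) p volume ≤ ENNReal.ofReal (C * ((2 : ℝ) ^ k) ^ (m + 2 * n / t)) := by
  obtain ⟨ha1, ha2, ha3⟩ := ha
  have hcar : ∀ α : (Fin n → ℕ) × (Fin n → ℕ), ∃ A' : En n → En n × En n → ℂ,
      Measurable (Function.uncurry A') ∧
      ∀ᵐ x : En n, ∀ w : En n × En n, d2 α.1 α.2 a x w.1 w.2 = A' x w := by
    intro α
    refine caratheodory_ae (A := fun x (w : En n × En n) => d2 α.1 α.2 a x w.1 w.2) ?_ ?_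
    · intro x
      have : (fun w : En n × En n => d2 α.1 α.2 a x w.1 w.2) = QQ α (fun q => a x q.1 q.2) := by
        ext w; exact (QQ_eq_d2 α a x (ha1 x) w).symm
      rw [this]
      exact (QQ_contDiff α (ha1 x)).continuous
    · intro w
      exact ha2 _ _ _ _
  choose A' hA'm hA' using hcar
  choose c hc using ha3
  obtain ⟨C₀, hC₀, hDD⟩ := DD_le n
  obtain ⟨B₀, hB₀, hps⟩ := psW_bdd n (4 * n)
  obtain ⟨V, hV, hvol⟩ := regW_vol n
  set S : ℝ := ∑ j ∈ Finset.range (4 * n + 1), ∑ α ∈ idx n j,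
    (|c α.1 α.2| * 8 ^ |m - ρ * j|) with hS
  have hS0 : 0 ≤ S := by positivity
  -- dominating kernel
  let K : ℕ → En n → En n × En n → ℝ≥0∞ := fun k x w =>
    (regW n k).indicator (fun _ => ENNReal.ofReal (C₀ * B₀)) w *
      ∑ j ∈ Finset.range (4 * n + 1), ∑ α ∈ idx n j,
        ENNReal.ofReal ((((2 : ℝ) ^ k) ^ ρ) ^ j) * ‖A' α x w‖ₑ
  have hin : ∀ k, Measurable ((regW n k).indicator (fun _ => ENNReal.ofReal (C₀ * B₀))) := fun k =>
    measurable_const.indicator regW_closed.measurableSet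
  have hKm : ∀ k, Measurable (Function.uncurry (K k)) := by
    intro k
    refine ((hin k).comp measurable_snd).mul ?_
    refine Finset.measurable_sum _ fun j _ => Finset.measurable_sum _ fun α _ => ?_
    exact (hA'm α).enorm.const_mul _
  refine ⟨(C₀ * B₀ * (S + 1)) * V ^ (1 / t),
    fun k x => (∫⁻ w, K k x w ^ t ∂(volume.restrict (regW n k))) ^ (1 / t), by positivity, ?_, ?_, ?_⟩
  · intro k
    have : IsFiniteMeasure (volume.restrict (regW n k)) :=
      ⟨by rw [Measure.restrict_apply_univ]; exact (hvol k).trans_lt ENNReal.ofReal_lt_top⟩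
    exact ((hKm k).pow_const t).lintegral_prod_right'.pow_const _
  · filter_upwards [ae_all_iff.mpr hA'] with x hx k
    have hl : 0 < ((2 : ℝ) ^ k) ^ ρ := by positivity
    have hl2 : ((2 : ℝ) ^ k) ^ ρ ≤ 2 ^ k := by
      calc _ ≤ ((2 : ℝ) ^ k) ^ (1 : ℝ) :=
            Real.rpow_le_rpow_of_exponent_le (one_le_pow₀ (by norm_num)) hρ1
        _ = _ := Real.rpow_one _
    refine ENNReal.rpow_le_rpow ?_ (by positivity)
    rw [← lintegral_indicator regW_closed.measurableSet]
    refine lintegral_mono fun w => ?_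
    by_cases hw : w ∈ regW n k
    · rw [Set.indicator_of_mem hw]
      refine ENNReal.rpow_le_rpow ?_ ht.le
      have h1 := hDD (fun q => a x q.1 q.2) (psW k) _ B₀ w hl (ha1 x) (psW_contDiff k)
        (fun i hi => hps k i _ w hi hl hl2)
      rw [← ofReal_norm]
      refine (ENNReal.ofReal_le_ofReal h1).trans (le_of_eq ?_)
      simp only [K]
      rw [Set.indicator_of_mem hw, ENNReal.ofReal_mul (by positivity)]
      congr 1
      rw [ENNReal.ofReal_sum_of_nonneg (fun _ _ => by positivity)]
      refine Finset.sum_congr rfl fun j _ => ?_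
      rw [ENNReal.ofReal_sum_of_nonneg (fun _ _ => by positivity)]
      refine Finset.sum_congr rfl fun α _ => ?_
      rw [ENNReal.ofReal_mul (by positivity), ofReal_norm, QQ_eq_d2 α a x (ha1 x), hx α w]
    · have h1 := hDD (fun q => a x q.1 q.2) (psW k) _ 0 w hl (ha1 x) (psW_contDiff k)
        (fun i hi => by rw [psW_iFD_zero k i hw]; simp)
      rw [mul_zero, zero_mul] at h1
      have h2 := norm_le_zero_iff.mp h1
      rw [h2]
      simp [ht]
  · intro k
    have : IsFiniteMeasure (volume.restrict (regW n k)) :=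
      ⟨by rw [Measure.restrict_apply_univ]; exact (hvol k).trans_lt ENNReal.ofReal_lt_top⟩
    set Q : ℝ := (2 : ℝ) ^ k with hQ
    have hQ0 : 0 < Q := by positivity
    have hp0 : p ≠ 0 := (zero_lt_one.trans_le hp).ne'
    have hb : ∀ w, eLpNorm (fun x => K k x w) p volume ≤
        ENNReal.ofReal (C₀ * B₀ * (S + 1) * Q ^ m) := by
      intro w
      have hmA : ∀ j α, AEMeasurable (fun x => ENNReal.ofReal ((Q ^ ρ) ^ j) * ‖A' α x w‖ₑ) volume := by
        intro j α
        have : Measurable (fun x => A' α x w) := (hA'm α).comp (measurable_id.prodMk measurable_const)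
        exact (this.enorm.const_mul _).aemeasurable
      by_cases hw : w ∈ regW n k
      · simp only [K, Set.indicator_of_mem hw]
        refine (enn_cmul hp0 ?_ _).trans ?_
        · exact Finset.aemeasurable_fun_sum _ fun j _ => Finset.aemeasurable_fun_sum _ fun α _ => hmA j α
        rw [mul_assoc (C₀ * B₀), ENNReal.ofReal_mul (p := C₀ * B₀) (q := (S + 1) * Q ^ m)
          (by positivity)]
        gcongr
        have s1 : eLpNorm (fun x => ∑ j ∈ Finset.range (4 * n + 1), ∑ α ∈ idx n j,
            ENNReal.ofReal ((Q ^ ρ) ^ j) * ‖A' α x w‖ₑ) p volume ≤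
            ∑ j ∈ Finset.range (4 * n + 1), ∑ α ∈ idx n j,
              eLpNorm (fun x => ENNReal.ofReal ((Q ^ ρ) ^ j) * ‖A' α x w‖ₑ) p volume := by
          have := eLpNorm_sum_le (μ := volume) (p := p) (s := Finset.range (4 * n + 1))
            (f := fun j x => ∑ α ∈ idx n j, ENNReal.ofReal ((Q ^ ρ) ^ j) * ‖A' α x w‖ₑ)
            (fun j _ => (Finset.aemeasurable_fun_sum _ fun α _ => hmA j α).aestronglyMeasurable) hp
          rw [show (fun x => ∑ j ∈ Finset.range (4 * n + 1), ∑ α ∈ idx n j,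
            ENNReal.ofReal ((Q ^ ρ) ^ j) * ‖A' α x w‖ₑ) = ∑ j ∈ Finset.range (4 * n + 1),
              fun x => ∑ α ∈ idx n j, ENNReal.ofReal ((Q ^ ρ) ^ j) * ‖A' α x w‖ₑ by
              ext x; rw [Finset.sum_apply]]
          refine this.trans (Finset.sum_le_sum fun j _ => ?_)
          have := eLpNorm_sum_le (μ := volume) (p := p) (s := idx n j)
            (f := fun α x => ENNReal.ofReal ((Q ^ ρ) ^ j) * ‖A' α x w‖ₑ)
            (fun α _ => (hmA j α).aestronglyMeasurable) hp
          rw [show (fun x => ∑ α ∈ idx n j, ENNReal.ofReal ((Q ^ ρ) ^ j) * ‖A' α x w‖ₑ) =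
            ∑ α ∈ idx n j, fun x => ENNReal.ofReal ((Q ^ ρ) ^ j) * ‖A' α x w‖ₑ by
              ext x; rw [Finset.sum_apply]]
          exact this
        refine s1.trans ?_
        have s2 : ∀ j ∈ Finset.range (4 * n + 1), ∀ α ∈ idx n j,
            eLpNorm (fun x => ENNReal.ofReal ((Q ^ ρ) ^ j) * ‖A' α x w‖ₑ) p volume ≤
              ENNReal.ofReal (|c α.1 α.2| * 8 ^ |m - ρ * j| * Q ^ m) := by
          intro j _ α hα
          have hmeas : Measurable (fun x => A' α x w) :=
            (hA'm α).comp (measurable_id.prodMk measurable_const)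
          refine (enn_cmul hp0 hmeas.enorm.aemeasurable _).trans ?_
          rw [eLpNorm_enorm]
          have e1 : eLpNorm (fun x => A' α x w) p volume =
              eLpNorm (fun x => d2 α.1 α.2 a x w.1 w.2) p volume := by
            refine eLpNorm_congr_ae ?_
            filter_upwards [hA' α] with x hx
            exact (hx w).symm
          rw [e1]
          have hdeg : (mdeg α.1 : ℝ) + (mdeg α.2 : ℝ) = j := by
            have := mem_idx.mp hα
            exact_mod_cast this
          have h3 := hc α.1 α.2 w.1 w.2
          rw [hdeg] at h3
          calc _ ≤ ENNReal.ofReal ((Q ^ ρ) ^ j) * ENNReal.ofReal (|c α.1 α.2| *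
                (8 ^ |m - ρ * j| * Q ^ (m - ρ * j))) := by
                gcongr
                refine h3.trans (ENNReal.ofReal_le_ofReal ?_)
                refine mul_le_mul (le_abs_self _) (regW_pow hw _) (by positivity) (abs_nonneg _)
            _ = _ := by
                rw [← ENNReal.ofReal_mul (by positivity)]
                congr 1
                have : Q ^ m = (Q ^ ρ) ^ j * Q ^ (m - ρ * j) := by
                  rw [← Real.rpow_natCast, ← Real.rpow_mul hQ0.le, ← Real.rpow_add hQ0]
                  congr 1; ring
                rw [this]; ring
        calc _ ≤ ∑ j ∈ Finset.range (4 * n + 1), ∑ α ∈ idx n j,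
              ENNReal.ofReal (|c α.1 α.2| * 8 ^ |m - ρ * j| * Q ^ m) :=
              Finset.sum_le_sum fun j hj => Finset.sum_le_sum fun α hα => s2 j hj α hα
          _ = ENNReal.ofReal (S * Q ^ m) := by
              rw [hS, Finset.sum_mul, ENNReal.ofReal_sum_of_nonneg (fun _ _ => by positivity)]
              refine Finset.sum_congr rfl fun j _ => ?_
              rw [Finset.sum_mul, ENNReal.ofReal_sum_of_nonneg (fun _ _ => by positivity)]
          _ ≤ _ := by
              refine ENNReal.ofReal_le_ofReal ?_
              gcongr; linarith
      · simp only [K, Set.indicator_of_notMem hw, zero_mul]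
        rw [eLpNorm_zero']
        exact zero_le
    refine (enn_mixed (hKm k) ht htp hb).trans ?_
    rw [Measure.restrict_apply_univ]
    calc _ ≤ ENNReal.ofReal (C₀ * B₀ * (S + 1) * Q ^ m) *
          ENNReal.ofReal (V * Q ^ (2 * n)) ^ (1 / t) := by
          gcongr
          exact hvol k
      _ = _ := by
          rw [ENNReal.ofReal_rpow_of_nonneg (by positivity) (by positivity),
            ← ENNReal.ofReal_mul (by positivity)]
          congr 1
          rw [Real.mul_rpow hV.le (by positivity), ← Real.rpow_natCast Q, ← Real.rpow_mul hQ0.le,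
            Real.rpow_add hQ0]
          push_cast
          rw [show 2 * (n : ℝ) * (1 / t) = 2 * n / t by ring]
          ring

/-! ### Assembling the estimate -/

theorem tsum_mul3 (u v w : ℕ → ℝ≥0∞) :
    ∑' k, u k * (v k * w k) ≤ (∑' k, u k) * ((∑' k, v k) * ∑' k, w k) := by
  rw [← ENNReal.tsum_mul_left, ← ENNReal.tsum_mul_left]
  refine ENNReal.tsum_le_tsum fun k => ?_
  gcongr
  · exact ENNReal.le_tsum k
  · exact ENNReal.le_tsum k

theorem geo_sum {ε : ℝ} (hε : 0 < ε) : ∃ G : ℝ, 0 < G ∧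
    ∑' k : ℕ, ENNReal.ofReal (((2 : ℝ) ^ k) ^ (-ε)) = ENNReal.ofReal G := by
  have h1 : ∀ k : ℕ, ((2 : ℝ) ^ k) ^ (-ε) = ((2 : ℝ) ^ (-ε)) ^ k := by
    intro k
    rw [← Real.rpow_natCast, ← Real.rpow_natCast, ← Real.rpow_mul (by norm_num),
      ← Real.rpow_mul (by norm_num), mul_comm]
  have h2 : (2 : ℝ) ^ (-ε) < 1 := Real.rpow_lt_one_of_one_lt_of_neg (by norm_num) (by linarith)
  have h3 := summable_geometric_of_lt_one (by positivity) h2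
  refine ⟨∑' k : ℕ, ((2 : ℝ) ^ k) ^ (-ε), ?_, ?_⟩
  · simp_rw [h1]
    exact h3.tsum_pos (fun k => by positivity) 0 (by positivity)
  · rw [ENNReal.ofReal_tsum_of_nonneg (fun k => by positivity)]
    simp_rw [h1]; exact h3

/-- Summation of scaled pieces in a Lebesgue space. -/
theorem sum_piece {n : ℕ} {q : ℝ≥0∞} (hq : 1 ≤ q) {F : ℕ → En n → ℝ≥0∞} (hF : ∀ k, Measurable (F k))
    {C e ε G : ℝ} (hC : 0 < C) (hG : ∑' k : ℕ, ENNReal.ofReal (((2 : ℝ) ^ k) ^ (-ε)) = ENNReal.ofReal G)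
    {N : ℝ≥0∞} (h : ∀ k : ℕ, eLpNorm (F k) q volume ≤ ENNReal.ofReal (C * ((2 : ℝ) ^ k) ^ e) * N) :
    eLpNorm (fun x => ∑' k : ℕ, ENNReal.ofReal (((2 : ℝ) ^ k) ^ (-e - ε)) * F k x) q volume ≤
      ENNReal.ofReal (C * G) * N := by
  have hq0 : q ≠ 0 := (zero_lt_one.trans_le hq).ne'
  refine (enn_tsum hq (fun k => ((hF k).const_mul _).aemeasurable)).trans ?_
  rw [ENNReal.ofReal_mul hC.le, ← hG, mul_assoc, ← ENNReal.tsum_mul_right, ← ENNReal.tsum_mul_left]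
  refine ENNReal.tsum_le_tsum fun k => ?_
  refine (enn_cmul hq0 (hF k).aemeasurable _).trans ?_
  have hQ : 0 < (2 : ℝ) ^ k := by positivity
  calc _ ≤ ENNReal.ofReal (((2 : ℝ) ^ k) ^ (-e - ε)) * (ENNReal.ofReal (C * ((2 : ℝ) ^ k) ^ e) * N) := by
        gcongr; exact h k
    _ = _ := by
        rw [← mul_assoc, ← mul_assoc, ← ENNReal.ofReal_mul (by positivity),
          ← ENNReal.ofReal_mul (by positivity)]
        congr 2
        rw [show -e - ε = -ε + -e by ring, Real.rpow_add hQ, Real.rpow_neg hQ.le e]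
        field_simp

theorem core_est {n : ℕ} {r p q₁ q₂ : ℝ≥0∞} (hp : 1 ≤ p) (hq₁ : 1 ≤ q₁) (hq₂ : 1 ≤ q₂)
    (hrel : r⁻¹ = p⁻¹ + q₁⁻¹ + q₂⁻¹) {m ρ : ℝ} (hρ1 : ρ ≤ 1)
    {s₁ s₂ t : ℝ} (hs : 1 ≤ s₁) (hs2 : s₁ < 2) (hst : s₁ ≤ t)
    (hst' : s₁ = 1 ∨ s₁ < t) (ks : 1 ≤ s₂) (ks2 : s₂ < 2) (kst : s₂ ≤ t)
    (kst' : s₂ = 1 ∨ s₂ < t) (htp : ENNReal.ofReal t ≤ p) (hsq : ENNReal.ofReal s₁ ≤ q₁)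
    (ksq : ENNReal.ofReal s₂ ≤ q₂)
    (hneg : m + n * (1 - ρ) * (1 / s₁ + 1 / s₂) < 0)
    {a : En n → En n → En n → ℂ} (ha : LpSm2 p m ρ a) :
    ∃ C : ℝ, 0 < C ∧ ∀ f g : 𝓢(En n, ℂ),
      eLpNorm (bfio a (fun x ξ => ⟪x, ξ⟫) (fun x η => ⟪x, η⟫) (⇑f) (⇑g)) r volume ≤
        ENNReal.ofReal C * eLpNorm (⇑f) q₁ volume * eLpNorm (⇑g) q₂ volume := by
  have ht : 0 < t := by linarith
  have hs0 : 0 < s₁ := by linarith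
  have ks0 : 0 < s₂ := by linarith
  obtain ⟨C₁, hC₁, hbil⟩ := bil_est (n := n) hs hs2 hst hst' ks ks2 kst kst'
  obtain ⟨C₂, U, hC₂, hUm, hU, hUp⟩ := U_est hp hρ1 ht htp ha
  set ε : ℝ := -(m + n * (1 - ρ) * (1 / s₁ + 1 / s₂)) / 3 with hε
  have hε0 : 0 < ε := by rw [hε]; linarith
  obtain ⟨G, hG0, hG⟩ := geo_sum hε0
  set e₀ : ℝ := m + 2 * n / t with he₀
  set e₁ : ℝ := -(n * ρ / s₁) with he₁
  set e₂ : ℝ := -(n * ρ / s₂) with he₂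
  set K₁ : ℝ := (π ^ n) ^ (1 / s₁) with hK₁
  set K₂ : ℝ := (π ^ n) ^ (1 / s₂) with hK₂
  set K₃ : ℝ := C₁ * (((2 : ℝ) ^ n) ^ (1 / s₁ - 1 / t) * ((2 : ℝ) ^ n) ^ (1 / s₂ - 1 / t)) with hK₃
  have hK₁0 : 0 < K₁ := by positivity
  have hK₂0 : 0 < K₂ := by positivity
  have hK₃0 : 0 < K₃ := by positivity
  refine ⟨K₃ * (C₂ * G * (K₁ * G * (K₂ * G))), by positivity, ?_⟩
  intro f g
  have hl : ∀ k : ℕ, 0 < ((2 : ℝ) ^ k) ^ ρ := fun k => by positivity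
  let u : ℕ → En n → ℝ≥0∞ := fun k x => ENNReal.ofReal (((2 : ℝ) ^ k) ^ (-e₀ - ε)) * U k x
  let φ : ℕ → En n → ℝ≥0∞ := fun k x =>
    ENNReal.ofReal (((2 : ℝ) ^ k) ^ (-e₁ - ε)) * Phi (((2 : ℝ) ^ k) ^ ρ) s₁ f x
  let γ : ℕ → En n → ℝ≥0∞ := fun k x =>
    ENNReal.ofReal (((2 : ℝ) ^ k) ^ (-e₂ - ε)) * Phi (((2 : ℝ) ^ k) ^ ρ) s₂ g x
  have hφm : ∀ k, Measurable (φ k) := fun k => (Phi_meas (hl k) f.continuous).const_mul _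
  have hγm : ∀ k, Measurable (γ k) := fun k => (Phi_meas (hl k) g.continuous).const_mul _
  have hum : ∀ k, Measurable (u k) := fun k => (hUm k).const_mul _
  have hPhi : ∀ {s : ℝ}, 0 < s → ∀ {q : ℝ≥0∞}, ENNReal.ofReal s ≤ q → ∀ (h : 𝓢(En n, ℂ)) (k : ℕ),
      eLpNorm (Phi (((2 : ℝ) ^ k) ^ ρ) s h) q volume ≤
        ENNReal.ofReal ((π ^ n) ^ (1 / s) * ((2 : ℝ) ^ k) ^ (-(n * ρ / s))) * eLpNorm h q volume := by
    intro s hs q hsq h k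
    refine (Phi_Lq (hl k) hs hsq h.continuous).trans (le_of_eq ?_)
    congr 2
    have hQ : 0 < (2 : ℝ) ^ k := by positivity
    rw [div_pow, Real.div_rpow (by positivity) (by positivity), div_eq_mul_inv]
    congr 1
    rw [← Real.rpow_natCast, ← Real.rpow_mul hQ.le, ← Real.rpow_mul hQ.le, ← Real.rpow_neg hQ.le]
    congr 1; field_simp
  have hpt : ∀ᵐ x : En n, ‖bfio a (fun x ξ => ⟪x, ξ⟫) (fun x η => ⟪x, η⟫) (⇑f) (⇑g) x‖ₑ ≤
      ENNReal.ofReal K₃ * ((∑' k, u k x) * ((∑' k, φ k x) * ∑' k, γ k x)) := by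
    filter_upwards [hU] with x hx
    refine (int_le_tsum _).trans ?_
    refine le_trans ?_ (mul_le_mul_right (tsum_mul3 (fun k => u k x) (fun k => φ k x)
      (fun k => γ k x)) (ENNReal.ofReal K₃))
    rw [← ENNReal.tsum_mul_left]
    refine ENNReal.tsum_le_tsum fun k => ?_
    have hQ : 0 < (2 : ℝ) ^ k := by positivity
    have h1 := hbil (fun w => a x w.1 w.2 * psW k w) f g (2 ^ (k + 1)) (((2 : ℝ) ^ k) ^ ρ) x
      ((ha.1 x).mul (psW_contDiff k)) (by positivity)
      (fun w hw => by rw [psW_zero k hw, mul_zero])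
      f.integrable f.continuous g.integrable g.continuous
    have h2 : (∫ w : En n × En n, psW k w * (a x w.1 w.2 *
        Complex.exp (Complex.I * Complex.ofReal (⟪x, w.1⟫ + ⟪x, w.2⟫)) * ft f w.1 * ft g w.2)) =
        ∫ w : En n × En n, a x w.1 w.2 * psW k w *
        Complex.exp (Complex.I * Complex.ofReal (⟪x, w.1⟫ + ⟪x, w.2⟫)) * ft f w.1 * ft g w.2 := by
      congr 1; ext w; ring
    rw [h2]
    refine h1.trans ?_
    have h3 : C₁ * (((2 ^ (k + 1)) ^ n) ^ (1 / s₁ - 1 / t) * ((2 ^ (k + 1)) ^ n) ^ (1 / s₂ - 1 / t)) =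
        K₃ * (((2 : ℝ) ^ k) ^ (-e₀ - ε) * (((2 : ℝ) ^ k) ^ (-e₁ - ε) * ((2 : ℝ) ^ k) ^ (-e₂ - ε))) := by
      rw [← Real.rpow_add hQ, ← Real.rpow_add hQ, pow_succ (2 : ℝ) k, mul_pow,
        Real.mul_rpow (by positivity) (by positivity), Real.mul_rpow (by positivity) (by positivity)]
      have h4 : (((2 : ℝ) ^ k) ^ n) ^ (1 / s₁ - 1 / t) * (((2 : ℝ) ^ k) ^ n) ^ (1 / s₂ - 1 / t) =
          ((2 : ℝ) ^ k) ^ (-e₀ - ε + (-e₁ - ε + (-e₂ - ε))) := by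
        rw [← Real.rpow_natCast ((2 : ℝ) ^ k) n, ← Real.rpow_mul hQ.le, ← Real.rpow_mul hQ.le,
          ← Real.rpow_add hQ]
        congr 1
        rw [hε, he₀, he₁, he₂]
        field_simp
        ring
      rw [hK₃, ← h4]
      ring
    rw [h3, ENNReal.ofReal_mul hK₃0.le, ENNReal.ofReal_mul (p := ((2 : ℝ) ^ k) ^ (-e₀ - ε))
      (by positivity), ENNReal.ofReal_mul (p := ((2 : ℝ) ^ k) ^ (-e₁ - ε)) (by positivity)]
    simp only [u, φ, γ]
    calc _ ≤ ENNReal.ofReal K₃ * (ENNReal.ofReal (((2 : ℝ) ^ k) ^ (-e₀ - ε)) *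
          (ENNReal.ofReal (((2 : ℝ) ^ k) ^ (-e₁ - ε)) * ENNReal.ofReal (((2 : ℝ) ^ k) ^ (-e₂ - ε)))) *
          U k x * Phi (((2 : ℝ) ^ k) ^ ρ) s₁ f x * Phi (((2 : ℝ) ^ k) ^ ρ) s₂ g x := by
          gcongr
          exact hx k
      _ = _ := by ring
  have hp0 : p ≠ 0 := (zero_lt_one.trans_le hp).ne'
  have hq₁0 : q₁ ≠ 0 := (zero_lt_one.trans_le hq₁).ne'
  have hq₂0 : q₂ ≠ 0 := (zero_lt_one.trans_le hq₂).ne'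
  have hr0 : r ≠ 0 := by
    intro h
    rw [h, ENNReal.inv_zero] at hrel
    have : p⁻¹ + q₁⁻¹ + q₂⁻¹ ≠ ∞ := by simp [hp0, hq₁0, hq₂0]
    exact this hrel.symm
  have mu : Measurable (fun x => ∑' k, u k x) := Measurable.tsum hum
  have mφ : Measurable (fun x => ∑' k, φ k x) := Measurable.tsum hφm
  have mγ : Measurable (fun x => ∑' k, γ k x) := Measurable.tsum hγm
  have b0 : eLpNorm (fun x => ∑' k, u k x) p volume ≤ ENNReal.ofReal (C₂ * G) := by
    have := sum_piece hp hUm hC₂ hG (N := 1) (e := e₀) (fun k => by rw [mul_one]; exact hUp k)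
    rwa [mul_one] at this
  have b1 : eLpNorm (fun x => ∑' k, φ k x) q₁ volume ≤
      ENNReal.ofReal (K₁ * G) * eLpNorm f q₁ volume :=
    sum_piece hq₁ (fun k => Phi_meas (hl k) f.continuous) hK₁0 hG (fun k => hPhi hs0 hsq f k)
  have b2 : eLpNorm (fun x => ∑' k, γ k x) q₂ volume ≤
      ENNReal.ofReal (K₂ * G) * eLpNorm g q₂ volume :=
    sum_piece hq₂ (fun k => Phi_meas (hl k) g.continuous) hK₂0 hG (fun k => hPhi ks0 ksq g k)
  have hh1 := enn_holder (μ := volume) (p := q₁) (q := q₂) (r := (q₁⁻¹ + q₂⁻¹)⁻¹)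
    mφ.aemeasurable mγ.aemeasurable (by rw [inv_inv]) hq₁0 hq₂0
  have hh2 := enn_holder (μ := volume) (p := p) (q := (q₁⁻¹ + q₂⁻¹)⁻¹) (r := r)
    mu.aemeasurable (mφ.mul mγ).aemeasurable (by rw [inv_inv, hrel, add_assoc]) hp0
    (by simp [hq₁0, hq₂0])
  calc _ ≤ eLpNorm (fun x => ENNReal.ofReal K₃ * ((∑' k, u k x) * ((∑' k, φ k x) * ∑' k, γ k x)))
        r volume := eLpNorm_mono_enorm_ae (by simpa using hpt)
    _ ≤ ENNReal.ofReal K₃ * eLpNorm (fun x => (∑' k, u k x) * ((∑' k, φ k x) * ∑' k, γ k x)) r volume :=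
        enn_cmul hr0 (mu.mul (mφ.mul mγ)).aemeasurable _
    _ ≤ ENNReal.ofReal K₃ * (ENNReal.ofReal (C₂ * G) * ((ENNReal.ofReal (K₁ * G) * eLpNorm f q₁ volume) *
        (ENNReal.ofReal (K₂ * G) * eLpNorm g q₂ volume))) := by
        gcongr
        refine hh2.trans ?_
        gcongr
        exact hh1.trans (by gcongr)
    _ = _ := by
        rw [ENNReal.ofReal_mul hK₃0.le, ENNReal.ofReal_mul (p := C₂ * G) (by positivity),
          ENNReal.ofReal_mul (p := K₁ * G) (by positivity)]
        ring

theorem pick_s {S η : ℝ} (hS1 : 1 ≤ S) (hS2 : S ≤ 2) (hη : 0 < η) :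
    ∃ s : ℝ, 1 ≤ s ∧ s < 2 ∧ s ≤ S ∧ (s = 1 ∨ s < S) ∧ 1 / s < 1 / S + η := by
  rcases hS1.eq_or_lt with h | h
  · exact ⟨1, le_rfl, by norm_num, hS1, Or.inl rfl, by rw [← h]; linarith⟩
  · have h1 : 1 / S < min 1 (1 / S + η) := by
      refine lt_min ?_ (by linarith)
      rw [div_lt_one (by linarith)]; exact h
    obtain ⟨v, hv1, hv2⟩ := exists_between h1
    have hv0 : 0 < v := lt_trans (by positivity) hv1
    have hv3 := lt_min_iff.mp hv2
    have hs1 : 1 < 1 / v := by rw [lt_div_iff₀ hv0]; linarith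
    have hs2 : 1 / v < S := by
      rw [div_lt_iff₀ hv0]; rw [div_lt_iff₀ (by linarith)] at hv1; linarith
    exact ⟨1 / v, hs1.le, by linarith, hs2.le, Or.inr hs2, by rw [one_div_one_div]; exact hv3.2⟩

theorem exps_le {p q₁ q₂ : ℝ≥0∞} (hp : 1 ≤ p) (hq₁ : 1 ≤ q₁) (hq₂ : 1 ≤ q₂) :
    (min 2 (min q₁ p))⁻¹.toReal + (min 2 (min q₂ p))⁻¹.toReal ≤
      (min 2 (min (max q₁ q₂) p))⁻¹.toReal +
        (min 2 (min (min q₁ q₂) (p⁻¹ + (max q₁ q₂)⁻¹)⁻¹))⁻¹.toReal := by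
  have hp0 : p ≠ 0 := (zero_lt_one.trans_le hp).ne'
  have hq₁0 : q₁ ≠ 0 := (zero_lt_one.trans_le hq₁).ne'
  have hq₂0 : q₂ ≠ 0 := (zero_lt_one.trans_le hq₂).ne'
  have key : ∀ M μ : ℝ≥0∞, M ≠ 0 → μ ≠ 0 → (min 2 (min μ p))⁻¹.toReal ≤
      (min 2 (min μ (p⁻¹ + M⁻¹)⁻¹))⁻¹.toReal := by
    intro M μ hM hμ
    refine ENNReal.toReal_mono ?_ ?_
    · rw [ENNReal.inv_ne_top]
      have h : (p⁻¹ + M⁻¹)⁻¹ ≠ 0 := by simp [hp0, hM]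
      refine (lt_min (by norm_num) (lt_min (pos_iff_ne_zero.mpr hμ) (pos_iff_ne_zero.mpr h))).ne'
    · rw [ENNReal.inv_le_inv]
      have h : (p⁻¹ + M⁻¹)⁻¹ ≤ p := by
        rw [ENNReal.inv_le_iff_inv_le]; exact le_self_add
      exact min_le_min le_rfl (min_le_min le_rfl h)
  rcases le_total q₁ q₂ with h | h
  · rw [max_eq_right h, min_eq_left h, add_comm]
    refine add_le_add le_rfl ?_
    exact key q₂ q₁ hq₂0 hq₁0
  · rw [max_eq_left h, min_eq_right h]
    refine add_le_add le_rfl ?_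
    exact key q₁ q₂ hq₁0 hq₂0

/-- Theorem 5.18: boundedness of rough bilinear pseudodifferential
operators. -/
theorem statement17 {n : ℕ} (r p q₁ q₂ : ℝ≥0∞) (hp : 1 ≤ p)
    (hq₁ : 1 ≤ q₁) (hq₂ : 1 ≤ q₂) (hrel : r⁻¹ = p⁻¹ + q₁⁻¹ + q₂⁻¹)
    (hmaxp : pconj p ≤ max q₁ q₂)
    (m ρ : ℝ) (hρ0 : 0 ≤ ρ) (hρ1 : ρ ≤ 1)
    (hm : m < (n : ℝ) * (ρ - 1) *
      ((min 2 (min (max q₁ q₂) p))⁻¹.toReal +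
        (min 2 (min (min q₁ q₂) (p⁻¹ + (max q₁ q₂)⁻¹)⁻¹))⁻¹.toReal))
    (a : En n → En n → En n → ℂ) (ha : LpSm2 p m ρ a) :
    ∃ C : ℝ, 0 < C ∧ ∀ f g : 𝓢(En n, ℂ),
      eLpNorm (bfio a (fun x ξ => ⟪x, ξ⟫) (fun x η => ⟪x, η⟫) (⇑f) (⇑g)) r volume ≤
        ENNReal.ofReal C * eLpNorm (⇑f) q₁ volume * eLpNorm (⇑g) q₂ volume := by
  have hp0 : p ≠ 0 := (zero_lt_one.trans_le hp).ne'
  have two_top : (2 : ℝ≥0∞) ≠ ∞ := by norm_num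
  set S₁ : ℝ := (min 2 (min q₁ p)).toReal with hS₁
  set S₂ : ℝ := (min 2 (min q₂ p)).toReal with hS₂
  set t : ℝ := (min 2 p).toReal with ht
  have fin : ∀ y : ℝ≥0∞, min 2 y ≠ ∞ := fun y => ((min_le_left _ _).trans_lt two_top.lt_top).ne
  have lo : ∀ q : ℝ≥0∞, 1 ≤ q → 1 ≤ (min 2 (min q p)).toReal := by
    intro q hq
    have h : (1 : ℝ≥0∞) ≤ min 2 (min q p) := le_min (by norm_num) (le_min hq hp)
    simpa using ENNReal.toReal_mono (fin _) h
  have hi : ∀ q : ℝ≥0∞, (min 2 (min q p)).toReal ≤ 2 := by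
    intro q
    simpa using ENNReal.toReal_mono two_top (min_le_left 2 (min q p))
  have lt' : ∀ q : ℝ≥0∞, (min 2 (min q p)).toReal ≤ t := fun q =>
    ENNReal.toReal_mono (fin _) (min_le_min le_rfl (min_le_right _ _))
  have hq : ∀ (q : ℝ≥0∞) (s : ℝ), s ≤ (min 2 (min q p)).toReal → ENNReal.ofReal s ≤ q := by
    intro q s h
    refine (ENNReal.ofReal_le_ofReal h).trans ?_
    rw [ENNReal.ofReal_toReal (fin _)]
    exact (min_le_right _ _).trans (min_le_left _ _)
  have htp : ENNReal.ofReal t ≤ p := by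
    rw [ht, ENNReal.ofReal_toReal (fin _)]
    exact min_le_right _ _
  have hN : 0 ≤ (n : ℝ) * (1 - ρ) := mul_nonneg (by positivity) (by linarith)
  have hle := exps_le hp hq₁ hq₂
  rw [ENNReal.toReal_inv, ENNReal.toReal_inv, ← hS₁, ← hS₂] at hle
  have hneg : m + n * (1 - ρ) * (1 / S₁ + 1 / S₂) < 0 := by
    rw [one_div, one_div]
    have := mul_le_mul_of_nonneg_left hle hN
    have e : ∀ A : ℝ, (n : ℝ) * (ρ - 1) * A = -((n : ℝ) * (1 - ρ) * A) := fun A => by ring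
    rw [e] at hm
    linarith
  set N : ℝ := (n : ℝ) * (1 - ρ) with hNdef
  set D : ℝ := -(m + N * (1 / S₁ + 1 / S₂)) with hD
  have hD0 : 0 < D := by linarith
  have hη : 0 < D / (2 * (N + 1)) := by positivity
  obtain ⟨s₁, a1, a2, a3, a4, a5⟩ := pick_s (lo q₁ hq₁) (hi q₁) hη
  obtain ⟨s₂, b1, b2, b3, b4, b5⟩ := pick_s (lo q₂ hq₂) (hi q₂) hη
  refine core_est hp hq₁ hq₂ hrel hρ1 a1 a2 (a3.trans (lt' q₁))
    (a4.imp id fun h => h.trans_le (lt' q₁)) b1 b2 (b3.trans (lt' q₂))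
    (b4.imp id fun h => h.trans_le (lt' q₂)) htp (hq q₁ s₁ a3) (hq q₂ s₂ b3) ?_ ha
  have h1 : N * (1 / s₁ + 1 / s₂) ≤ N * (1 / S₁ + 1 / S₂ + 2 * (D / (2 * (N + 1)))) :=
    mul_le_mul_of_nonneg_left (by linarith) hN
  have h2 : N * (2 * (D / (2 * (N + 1)))) < D := by
    rw [show N * (2 * (D / (2 * (N + 1)))) = (N * D) / (N + 1) by field_simp,
      div_lt_iff₀ (by positivity)]
    nlinarith
  rw [mul_add] at h1
  linarith
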